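/- Let p ≡ −1 (mod 16) be a prime, K = ℚ(⁴√p), and L = K(√2) = ℚ(⁴√p, √2). Then 4 divides the class number h_K of K if and only if 2 divides the class number h_L of L. -/

import Mathlib

open NumberField IntermediateField



/-! ### Group theory -/

section GroupTheory

/-- The group of elements whose image under `f` is a square. -/
def selmer {X I : Type*} [CommGroup X] [CommGroup I] (f : X →* I) : Subgroup X :=
  (powMonoidHom 2 : I →* I).range.comap f

theorem selmer_index {X I : Type*} [CommGroup X] [CommGroup I] (f : X →* I)
    (htf : ∀ a : I, a ^ 2 = 1 → a = 1) :
    (powMonoidHom 2 : X →* X).range.relIndex (selmer f) =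
      (powMonoidHom 2 : f.ker →* f.ker).range.index *
        Nat.card (powMonoidHom 2 : (I ⧸ f.range) →* (I ⧸ f.range)).ker := by
  classical
  set Sq := (powMonoidHom 2 : X →* X).range with hSq
  have hinj : Function.Injective (powMonoidHom 2 : I →* I) := by
    rw [injective_iff_map_eq_one]
    intro a ha
    exact htf a (by simpa using ha)
  have h1 : Sq ≤ Sq ⊔ f.ker := le_sup_left
  have h2 : Sq ⊔ f.ker ≤ selmer f := by
    refine sup_le ?_ ?_
    · rintro _ ⟨x, rfl⟩
      exact ⟨f x, by simp⟩
    · intro x hx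
      rw [MonoidHom.mem_ker] at hx
      exact ⟨1, by simp [hx]⟩
  rw [← Subgroup.relIndex_mul_relIndex _ _ _ h1 h2]
  congr 1
  · rw [Subgroup.relIndex_sup_left, Subgroup.relIndex]
    congr 1
    ext ⟨x, hx⟩
    rw [Subgroup.mem_subgroupOf]
    constructor
    · rintro ⟨y, hy⟩
      have : y ∈ f.ker := by
        rw [MonoidHom.mem_ker] at hx ⊢
        apply htf
        rw [← map_pow, ← hx]
        congr 1
      exact ⟨⟨y, this⟩, Subtype.ext hy⟩
    · rintro ⟨y, hy⟩
      exact ⟨y, congrArg Subtype.val hy⟩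
  · let e := MonoidHom.ofInjective hinj
    let g0 : selmer f →* (powMonoidHom 2 : I →* I).range :=
      (f.comp (selmer f).subtype).codRestrict _ (fun x => x.2)
    let g : selmer f →* (I ⧸ f.range) :=
      (QuotientGroup.mk' f.range).comp (e.symm.toMonoidHom.comp g0)
    have hg0 : ∀ (x : selmer f) (a : I), f x = a ^ 2 → g x = QuotientGroup.mk' f.range a := by
      intro x a hxa
      have : e.symm (g0 x) = a := by
        rw [MulEquiv.symm_apply_eq]
        apply Subtype.ext
        exact hxa
      simp [g, this]
    have hker : g.ker = (Sq ⊔ f.ker).subgroupOf (selmer f) := by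
      ext x
      obtain ⟨a, ha⟩ := x.2
      have ha' : f x = a ^ 2 := by simpa using ha.symm
      rw [MonoidHom.mem_ker, hg0 x a ha', Subgroup.mem_subgroupOf, Subgroup.mem_sup]
      rw [QuotientGroup.mk'_apply, QuotientGroup.eq_one_iff]
      constructor
      · rintro ⟨y, rfl⟩
        refine ⟨y ^ 2, ⟨y, rfl⟩, x * (y ^ 2)⁻¹, ?_, by simp⟩
        rw [MonoidHom.mem_ker, map_mul, ha']
        simp
      · rintro ⟨_, ⟨y, rfl⟩, z, hz, hx⟩
        refine ⟨y, ?_⟩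
        apply hinj
        rw [MonoidHom.mem_ker] at hz
        have : f x = f y ^ 2 := by rw [← hx, map_mul, hz]; simp
        simpa [ha'] using this.symm
    have hrange : g.range = (powMonoidHom 2 : (I ⧸ f.range) →* (I ⧸ f.range)).ker := by
      ext c
      constructor
      · rintro ⟨x, rfl⟩
        obtain ⟨a, ha⟩ := x.2
        have ha' : f x = a ^ 2 := by simpa using ha.symm
        rw [hg0 x a ha', MonoidHom.mem_ker, powMonoidHom_apply, ← map_pow, ← ha',
          QuotientGroup.mk'_apply, QuotientGroup.eq_one_iff]
        exact ⟨_, rfl⟩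
      · intro hc
        obtain ⟨a, rfl⟩ := QuotientGroup.mk'_surjective f.range c
        rw [MonoidHom.mem_ker, powMonoidHom_apply, ← map_pow, QuotientGroup.mk'_apply,
          QuotientGroup.eq_one_iff] at hc
        obtain ⟨y, hy⟩ := hc
        exact ⟨⟨y, a, by simpa using hy.symm⟩, hg0 _ a hy⟩
    rw [Subgroup.relIndex, ← hker, Subgroup.index_ker, hrange]

/-- Adjoining an element whose square lies in `H` multiplies the index by at most two. -/
theorem relIndex_sup_zpowers_dvd {X : Type*} [CommGroup X] (H : Subgroup X) (x : X)
    (hx : x ^ 2 ∈ H) : H.relIndex (H ⊔ Subgroup.zpowers x) ∣ 2 := by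
  rw [Subgroup.relIndex_sup_left, Subgroup.relIndex, Subgroup.index]
  have : IsCyclic (Subgroup.zpowers x ⧸ H.subgroupOf (Subgroup.zpowers x)) :=
    isCyclic_of_surjective (QuotientGroup.mk' _) (QuotientGroup.mk'_surjective _)
  rw [← IsCyclic.exponent_eq_card]
  apply Monoid.exponent_dvd_of_forall_pow_eq_one
  intro c
  obtain ⟨⟨_, n, rfl⟩, rfl⟩ := QuotientGroup.mk'_surjective _ c
  rw [← map_pow, QuotientGroup.mk'_apply, QuotientGroup.eq_one_iff, Subgroup.mem_subgroupOf]
  have : (x ^ 2) ^ n ∈ H := H.zpow_mem hx n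
  have h2 : ((x ^ n) ^ 2 : X) = (x ^ 2) ^ n := by
    rw [← zpow_natCast, ← zpow_natCast, ← zpow_mul, ← zpow_mul, mul_comm]
  rw [← h2] at this
  exact this

end GroupTheory

section GroupTheory2

theorem index_double_aux {B T : Type*} [AddCommGroup B] [AddCommGroup T] [Finite T]
    [Module.Finite ℤ B] (n : ℕ)
    (e : B ≃+ (Fin n →₀ ℤ) × T) :
    (nsmulAddMonoidHom 2 : B →+ B).range.index =
      2 ^ (Module.finrank ℤ B) * Nat.card (nsmulAddMonoidHom 2 : B →+ B).ker := by
  have hfin : Module.finrank ℤ B = n := by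
    let g : B →ₗ[ℤ] (Fin n →₀ ℤ) :=
      (LinearMap.fst ℤ (Fin n →₀ ℤ) T).comp e.toIntLinearEquiv.toLinearMap
    have hg : Function.Surjective g := fun c => ⟨e.symm (c, 0), by simp [g]⟩
    have h := Submodule.finrank_quotient_add_finrank (LinearMap.ker g)
    have hk : Module.finrank ℤ (LinearMap.ker g) = 0 := by
      have : Finite (LinearMap.ker g) := by
        refine Finite.of_injective (fun x => (e x.1).2) ?_
        rintro ⟨x, hx⟩ ⟨y, hy⟩ h
        apply Subtype.ext
        apply e.injective
        refine Prod.ext ?_ h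
        have hx' : (e x).1 = 0 := hx
        have hy' : (e y).1 = 0 := hy
        simp [hx', hy']
      rw [Module.finrank_eq_zero_iff]
      intro x
      refine ⟨(addOrderOf x : ℤ), ?_, ?_⟩
      · exact_mod_cast (addOrderOf_pos x).ne'
      · simp [addOrderOf_nsmul_eq_zero]
    rw [hk, (g.quotKerEquivOfSurjective hg).finrank_eq] at h
    simpa using h.symm
  have h1 : (nsmulAddMonoidHom 2 : B →+ B).range =
      (((nsmulAddMonoidHom 2 : (Fin n →₀ ℤ) →+ (Fin n →₀ ℤ)).range.prod
        (nsmulAddMonoidHom 2 : T →+ T).range)).comap e.toAddMonoidHom := by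
    ext x
    constructor
    · rintro ⟨y, rfl⟩
      exact ⟨⟨(e y).1, by simp⟩, ⟨(e y).2, by simp⟩⟩
    · rintro ⟨⟨a, ha⟩, ⟨b, hb⟩⟩
      refine ⟨e.symm (a, b), ?_⟩
      apply e.injective
      have h2 := congrArg₂ Prod.mk ha hb
      simpa [← map_nsmul] using h2
  have h2 : Nat.card (nsmulAddMonoidHom 2 : B →+ B).ker =
      Nat.card (nsmulAddMonoidHom 2 : T →+ T).ker := by
    refine Nat.card_congr (Equiv.ofBijective (fun x => ⟨(e x.1).2, ?_⟩) ⟨?_, ?_⟩)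
    · have : (2 : ℕ) • x.1 = 0 := x.2
      have h3 := congrArg (fun z => (e z).2) this
      simpa [AddMonoidHom.mem_ker] using h3
    · rintro ⟨x, hx⟩ ⟨y, hy⟩ h
      have h0 : ∀ z : B, (2 : ℕ) • z = 0 → (e z).1 = 0 := by
        intro z hz
        have h3 := congrArg (fun z => (e z).1) hz
        simpa using h3
      apply Subtype.ext
      apply e.injective
      refine Prod.ext ?_ (congrArg Subtype.val h)
      rw [h0 x hx, h0 y hy]
    · rintro ⟨t, ht⟩
      refine ⟨⟨e.symm (0, t), ?_⟩, ?_⟩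
      · have ht' : (2 : ℕ) • t = 0 := ht
        apply e.injective
        simp [ht']
      · simp
  have hT : (nsmulAddMonoidHom 2 : T →+ T).ker.FiniteIndex := inferInstance
  rw [h1, AddSubgroup.index_comap_of_surjective _ e.surjective, AddSubgroup.index_prod,
    AddSubgroup.index_range (hf := hT), h2, hfin]
  congr 1
  simpa using AddSubgroup.index_range_nsmul (Fin n →₀ ℤ) 2

theorem index_double {B : Type*} [AddCommGroup B] [Module.Finite ℤ B] :
    (nsmulAddMonoidHom 2 : B →+ B).range.index =
      2 ^ (Module.finrank ℤ B) * Nat.card (nsmulAddMonoidHom 2 : B →+ B).ker := by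
  have : AddGroup.FG B := Module.Finite.iff_addGroup_fg.mp inferInstance
  obtain ⟨n, ι, _, p, hp, k, ⟨e⟩⟩ := AddCommGroup.equiv_free_prod_directSum_zmod B
  have : ∀ i, NeZero (p i ^ k i) := fun i => ⟨pow_ne_zero _ (hp i).ne_zero⟩
  have : Finite (DirectSum ι fun i => ZMod (p i ^ k i)) := by
    classical
    exact Finite.of_equiv _ (DirectSum.addEquivProd (fun i => ZMod (p i ^ k i))).symm.toEquiv
  exact index_double_aux n e

/-- The index of the subgroup of squares in a finitely generated commutative group. -/
theorem index_squares {A : Type*} [CommGroup A] [Module.Finite ℤ (Additive A)] :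
    (powMonoidHom 2 : A →* A).range.index =
      2 ^ (Module.finrank ℤ (Additive A)) * Nat.card (powMonoidHom 2 : A →* A).ker :=
  index_double (B := Additive A)

theorem finrank_of_double {B C : Type*} [AddCommGroup B] [AddCommGroup C]
    [Module.Finite ℤ B] [Module.Finite ℤ C]
    (g : B →ₗ[ℤ] C) (hg : ∀ c, ∃ b, g b = (2 : ℤ) • c) :
    Module.finrank ℤ B = Module.finrank ℤ (LinearMap.ker g) + Module.finrank ℤ C := by
  have h1 := Submodule.finrank_quotient_add_finrank (LinearMap.ker g)
  have h2 := Submodule.finrank_quotient_add_finrank (LinearMap.range g)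
  rw [g.quotKerEquivRange.finrank_eq] at h1
  have h3 : Module.finrank ℤ (C ⧸ LinearMap.range g) = 0 := by
    rw [Module.finrank_eq_zero_iff]
    intro x
    obtain ⟨c, rfl⟩ := Submodule.Quotient.mk_surjective _ x
    refine ⟨2, by norm_num, ?_⟩
    rw [← Submodule.Quotient.mk_smul, Submodule.Quotient.mk_eq_zero]
    exact hg c
  omega

/-- Herbrand quotient of a finitely generated commutative group with an involution. -/
theorem herbrand {E : Type*} [CommGroup E] [Module.Finite ℤ (Additive E)] (s : E →* E)
    (hs : ∀ x, s (s x) = x) (φ ψ : E →* E) (hφ : ∀ x, φ x = x * s x) (hψ : ∀ x, ψ x = x / s x) :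
    (φ.range.relIndex ψ.ker) * 2 ^ (Module.finrank ℤ (Additive φ.ker)) =
      (ψ.range.relIndex φ.ker) * 2 ^ (Module.finrank ℤ (Additive ψ.ker)) ∧
      Module.finrank ℤ (Additive φ.ker) + Module.finrank ℤ (Additive ψ.ker) =
        Module.finrank ℤ (Additive E) ∧ φ.range.relIndex ψ.ker ≠ 0 := by
  have memP : ∀ x, x ∈ ψ.ker ↔ s x = x := by
    intro x
    rw [MonoidHom.mem_ker, hψ, div_eq_one, eq_comm]
  have memQ : ∀ x, x ∈ φ.ker ↔ x * s x = 1 := by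
    intro x
    rw [MonoidHom.mem_ker, hφ]
  have finsub : ∀ H : Subgroup E, Module.Finite ℤ (Additive H) := by
    intro H
    refine Module.Finite.of_injective (M := Additive H) (N := Additive E)
      (MonoidHom.toAdditive H.subtype).toIntLinearMap ?_
    exact Subtype.val_injective
  have := finsub φ.ker
  have := finsub ψ.ker
  have hNP : φ.range ≤ ψ.ker := by
    rintro _ ⟨x, rfl⟩
    rw [memP, hφ, map_mul, hs, mul_comm]
  have hDQ : ψ.range ≤ φ.ker := by
    rintro _ ⟨x, rfl⟩
    rw [memQ, hψ, map_div, hs]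
    simp
  have hP2 : ψ.ker.map φ = ψ.ker.map (powMonoidHom 2) := by
    ext y
    constructor
    · rintro ⟨x, hx, rfl⟩
      exact ⟨x, hx, by rw [hφ, (memP x).1 hx, powMonoidHom_apply, pow_two]⟩
    · rintro ⟨x, hx, rfl⟩
      exact ⟨x, hx, by rw [hφ, (memP x).1 hx, powMonoidHom_apply, pow_two]⟩
  have hQ2 : φ.ker.map ψ = φ.ker.map (powMonoidHom 2) := by
    have : ∀ x ∈ φ.ker, ψ x = x ^ 2 := by
      intro x hx
      have : s x = x⁻¹ := by
        rw [eq_inv_iff_mul_eq_one, mul_comm]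
        exact (memQ x).1 hx
      rw [hψ, this, div_inv_eq_mul, pow_two]
    ext y
    constructor
    · rintro ⟨x, hx, rfl⟩
      exact ⟨x, hx, (this x hx).symm⟩
    · rintro ⟨x, hx, rfl⟩
      exact ⟨x, hx, this x hx⟩
  have sqidx : ∀ H : Subgroup E, (H.map (powMonoidHom 2)).relIndex H =
      (powMonoidHom 2 : H →* H).range.index := by
    intro H
    rw [Subgroup.relIndex]
    congr 1
    ext ⟨x, hx⟩
    rw [Subgroup.mem_subgroupOf]
    constructor
    · rintro ⟨y, hy, hyx⟩
      exact ⟨⟨y, hy⟩, Subtype.ext hyx⟩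
    · rintro ⟨y, hy⟩
      exact ⟨y.1, y.2, congrArg Subtype.val hy⟩
  have e1 : (ψ.ker.map φ).relIndex φ.range = (ψ.ker ⊔ φ.ker).index := by
    rw [MonoidHom.range_eq_map, Subgroup.relIndex_map_map, top_sup_eq, Subgroup.relIndex_top_right]
  have e2 : (φ.ker.map ψ).relIndex ψ.range = (ψ.ker ⊔ φ.ker).index := by
    rw [MonoidHom.range_eq_map, Subgroup.relIndex_map_map, top_sup_eq, Subgroup.relIndex_top_right,
      sup_comm]
  have f1 : (ψ.ker ⊔ φ.ker).index * φ.range.relIndex ψ.ker =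
      2 ^ (Module.finrank ℤ (Additive ψ.ker)) *
        Nat.card (powMonoidHom 2 : ψ.ker →* ψ.ker).ker := by
    rw [← index_squares, ← sqidx, ← hP2, ← e1]
    exact Subgroup.relIndex_mul_relIndex _ _ _ (MonoidHom.range_eq_map φ ▸ Subgroup.map_mono le_top)
      hNP
  have f2 : (ψ.ker ⊔ φ.ker).index * ψ.range.relIndex φ.ker =
      2 ^ (Module.finrank ℤ (Additive φ.ker)) *
        Nat.card (powMonoidHom 2 : φ.ker →* φ.ker).ker := by
    rw [← index_squares, ← sqidx, ← hQ2, ← e2]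
    exact Subgroup.relIndex_mul_relIndex _ _ _ (MonoidHom.range_eq_map ψ ▸ Subgroup.map_mono le_top)
      hDQ
  have hcard : Nat.card (powMonoidHom 2 : φ.ker →* φ.ker).ker =
      Nat.card (powMonoidHom 2 : ψ.ker →* ψ.ker).ker := by
    have key : ∀ x : E, x ^ 2 = 1 → (x * s x = 1 ↔ s x = x) := by
      intro x hx
      have : x⁻¹ = x := by rw [inv_eq_iff_mul_eq_one, ← pow_two, hx]
      rw [mul_eq_one_iff_inv_eq, this, eq_comm]
    refine Nat.card_congr ⟨fun x => ⟨⟨x.1.1, ?_⟩, ?_⟩, fun x => ⟨⟨x.1.1, ?_⟩, ?_⟩, ?_, ?_⟩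
    · have h2 : x.1.1 ^ 2 = 1 := congrArg Subtype.val x.2
      exact (memP _).2 ((key _ h2).1 ((memQ _).1 x.1.2))
    · have h2 : x.1 ^ 2 = 1 := x.2
      have h3 : x.1.1 ^ 2 = 1 := congrArg Subtype.val h2
      exact Subtype.ext h3
    · have h2 : x.1.1 ^ 2 = 1 := congrArg Subtype.val x.2
      exact (memQ _).2 ((key _ h2).2 ((memP _).1 x.1.2))
    · have h2 : x.1 ^ 2 = 1 := x.2
      have h3 : x.1.1 ^ 2 = 1 := congrArg Subtype.val h2
      exact Subtype.ext h3
    · intro x; rfl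
    · intro x; rfl
  have hpos : Nat.card (powMonoidHom 2 : ψ.ker →* ψ.ker).ker ≠ 0 := by
    have hne : (powMonoidHom 2 : ψ.ker →* ψ.ker).range.index ≠ 0 := by
      have : Group.FG ψ.ker := by
        rw [GroupFG.iff_add_fg]
        exact Module.Finite.iff_addGroup_fg.mp inferInstance
      exact (Subgroup.finiteIndex_range_powMonoidHom_of_fg ψ.ker (n := 2) (by norm_num)).index_ne_zero
    rw [index_squares] at hne
    exact right_ne_zero_of_mul hne
  have hne : (ψ.ker ⊔ φ.ker).index * φ.range.relIndex ψ.ker ≠ 0 := by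
    rw [f1]
    exact mul_ne_zero (by positivity) hpos
  refine ⟨?_, ?_, right_ne_zero_of_mul hne⟩
  · apply Nat.eq_of_mul_eq_mul_left (Nat.pos_of_ne_zero (left_ne_zero_of_mul hne))
    apply Nat.eq_of_mul_eq_mul_left (Nat.pos_of_ne_zero hpos)
    calc _ = ((ψ.ker ⊔ φ.ker).index * φ.range.relIndex ψ.ker) *
          (2 ^ (Module.finrank ℤ (Additive φ.ker)) *
            Nat.card (powMonoidHom 2 : φ.ker →* φ.ker).ker) := by rw [hcard]; ring
      _ = _ := by rw [f1, ← f2]; ring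
  · let g : Additive E →ₗ[ℤ] Additive ψ.ker :=
      (MonoidHom.toAdditive (φ.codRestrict ψ.ker (fun x => hNP ⟨x, rfl⟩))).toIntLinearMap
    have h := finrank_of_double g (by
      intro c
      refine ⟨Additive.ofMul (c.toMul.1), ?_⟩
      apply Additive.toMul.injective
      apply Subtype.ext
      change φ c.toMul.1 = (c.toMul.1) ^ (2 : ℤ)
      rw [hφ, (memP _).1 c.toMul.2, zpow_two])
    rw [h]
    congr 1
    refine LinearEquiv.finrank_eq (AddEquiv.toIntLinearEquiv ⟨⟨fun x => ⟨Additive.ofMul x.toMul.1, ?_⟩,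
      fun x => Additive.ofMul ⟨x.1.toMul, ?_⟩, ?_, ?_⟩, ?_⟩)
    · exact Subtype.ext x.toMul.2
    · exact congrArg Subtype.val (x.2 : g x.1 = 0)
    · intro x; rfl
    · intro x; rfl
    · intro x y; rfl

end GroupTheory2

section Abstract

/-- The formal properties of ideals and elements in a quadratic extension `M / F`. -/
structure QData {XF IF XM IM : Type*} [CommGroup XF] [CommGroup IF] [CommGroup XM] [CommGroup IM]
    (fF : XF →* IF) (fM : XM →* IM) where
  i : XF →* XM
  j : IF →* IM
  s : XM →* XM
  t : IM →* IM
  fi : ∀ x, fM (i x) = j (fF x)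
  fs : ∀ x, fM (s x) = t (fM x)
  ss : ∀ x, s (s x) = x
  tt : ∀ x, t (t x) = x
  si : ∀ x, s (i x) = i x
  tj : ∀ x, t (j x) = j x
  ii : Function.Injective i
  jj : Function.Injective j
  sfix : ∀ x, s x = x → ∃ y, i y = x
  h90 : ∀ x, x * s x = 1 → ∃ y, x = y / s y
  norm : ∀ a, ∃ b, a * t a = j b
  tf : ∀ a : IM, a ^ 2 = 1 → a = 1

namespace QData

variable {XF IF XM IM : Type*} [CommGroup XF] [CommGroup IF] [CommGroup XM] [CommGroup IM]
    {fF : XF →* IF} {fM : XM →* IM} (D : QData fF fM)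

theorem tfF (D : QData fF fM) (a : IF) (ha : a ^ 2 = 1) : a = 1 := by
  apply D.jj
  rw [map_one]
  apply D.tf
  rw [← map_pow, ha, map_one]

theorem exists_norm (x : XM) : ∃ y, x * D.s x = D.i y := by
  obtain ⟨y, hy⟩ := D.sfix (x * D.s x) (by rw [map_mul, D.ss, mul_comm])
  exact ⟨y, hy.symm⟩

theorem norm_ideal {x : XM} {y : XF} {a : IM} {b : IF} (hxy : x * D.s x = D.i y)
    (hab : a * D.t a = D.j b) (h : fM x = a ^ 2) : fF y = b ^ 2 := by
  apply D.jj
  rw [← D.fi, ← hxy, map_mul, D.fs, h, map_pow, ← mul_pow, hab, map_pow]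

/-- Elements of the Selmer group whose norm is a square come from the base field. -/
theorem descent {a : XM} (ha : a ∈ selmer fM) {c : XF} (hc : a * D.s a = D.i (c ^ 2)) :
    ∃ (y : XM) (d : XF) (q : IM), a = y ^ 2 * D.i d ∧ D.j (fF d) = q ^ 2 ∧ D.t q = q := by
  obtain ⟨q0, hq0⟩ := ha
  have hq0' : q0 ^ 2 = fM a := hq0
  obtain ⟨y, hy⟩ := D.h90 (a / D.i c) (by
    rw [map_div, D.si, div_mul_div_comm, hc, map_pow, pow_two]
    simp)
  obtain ⟨n, hn⟩ := D.exists_norm y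
  have h1 : a = y ^ 2 * D.i (c / n) := by
    rw [map_div, ← hn, eq_comm, ← div_eq_one]
    rw [div_eq_iff_eq_mul] at hy
    rw [hy, pow_two]
    simp only [div_eq_mul_inv, mul_inv]
    have : ∀ p q r : XM, p * p * (r * (p⁻¹ * q⁻¹)) * (p⁻¹ * q⁻¹⁻¹ * r⁻¹) = 1 := by
      intro p q r
      have : p * p * (r * (p⁻¹ * q⁻¹)) * (p⁻¹ * q⁻¹⁻¹ * r⁻¹) =
        (p * p⁻¹) * (p * p⁻¹) * (r * r⁻¹) * (q⁻¹ * q⁻¹⁻¹) := by ac_rfl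
      rw [this]
      simp
    exact this _ _ _
  have h2 : D.j (fF (c / n)) = (q0 / fM y) ^ 2 := by
    rw [← D.fi, div_pow, hq0', ← map_pow, ← map_div]
    congr 1
    rw [h1]
    simp
  refine ⟨y, c / n, q0 / fM y, h1, h2, ?_⟩
  have h3 : (D.t (q0 / fM y) / (q0 / fM y)) ^ 2 = 1 := by
    rw [div_pow, ← map_pow, ← h2, D.tj, div_self']
  exact div_eq_one.1 (D.tf _ h3)

/-- The induced map on class groups. -/
def iota : IF ⧸ fF.range →* IM ⧸ fM.range :=
  QuotientGroup.map _ _ D.j (by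
    rintro _ ⟨x, rfl⟩
    exact ⟨D.i x, D.fi x⟩)

theorem iota_mk (a : IF) : D.iota (QuotientGroup.mk' _ a) = QuotientGroup.mk' _ (D.j a) := rfl

theorem iota_ker_sq {c : IF ⧸ fF.range} (hc : D.iota c = 1) : c ^ 2 = 1 := by
  obtain ⟨a, rfl⟩ := QuotientGroup.mk'_surjective _ c
  rw [iota_mk, QuotientGroup.mk'_apply, QuotientGroup.eq_one_iff] at hc
  obtain ⟨γ, hγ⟩ := hc
  obtain ⟨n, hn⟩ := D.exists_norm γ
  rw [← map_pow, QuotientGroup.mk'_apply, QuotientGroup.eq_one_iff]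
  refine ⟨n, ?_⟩
  apply D.jj
  rw [← D.fi, ← hn, map_mul, D.fs, hγ, D.tj, map_pow, pow_two]

theorem not_four_dvd (D : QData fF fM) [Finite (IF ⧸ fF.range)] (hM : ¬ 2 ∣ Nat.card (IM ⧸ fM.range))
    (h2 : Nat.card (powMonoidHom 2 : (IF ⧸ fF.range) →* (IF ⧸ fF.range)).ker ∣ 2) :
    ¬ 4 ∣ Nat.card (IF ⧸ fF.range) := by
  set n := Nat.card (IM ⧸ fM.range) with hn
  let P : (IF ⧸ fF.range) →* (IF ⧸ fF.range) := powMonoidHom n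
  have hr : Nat.card P.range ∣ 2 := by
    refine dvd_trans (Subgroup.card_dvd_of_le ?_) h2
    rintro _ ⟨c, rfl⟩
    apply D.iota_ker_sq
    change D.iota (c ^ n) = 1
    rw [map_pow, hn, pow_card_eq_one']
  have hk : ¬ 2 ∣ Nat.card P.ker := by
    intro h
    have : Fact (Nat.Prime 2) := ⟨Nat.prime_two⟩
    obtain ⟨x, hx⟩ := exists_prime_orderOf_dvd_card' (G := P.ker) 2 h
    apply hM
    rw [← hx]
    apply orderOf_dvd_of_pow_eq_one
    exact Subtype.ext x.2
  have hcard : Nat.card (IF ⧸ fF.range) = Nat.card P.ker * Nat.card P.range := by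
    rw [← Subgroup.index_ker, Subgroup.card_mul_index]
  rw [hcard]
  intro h
  have hc : Nat.Coprime 4 (Nat.card P.ker) := by
    have := (Nat.Prime.coprime_iff_not_dvd Nat.prime_two).2 hk
    exact Nat.Coprime.pow_left 2 this
  have := (hc.dvd_of_dvd_mul_left h).trans hr
  norm_num at this

theorem four_dvd [Finite (IF ⧸ fF.range)] [Finite (IM ⧸ fM.range)]
    [Module.Finite ℤ (Additive fM.ker)]
    (hrank : Module.finrank ℤ (Additive fM.ker) = 2 * Module.finrank ℤ (Additive fF.ker) + 1)
    (inv : ∀ a, D.t a = a → ∃ b, D.j b = a)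
    (h2 : 2 ∣ Nat.card (IM ⧸ fM.range)) : 4 ∣ Nat.card (IF ⧸ fF.range) := by
  have hsE : ∀ x : fM.ker, D.s x ∈ fM.ker := by
    intro x
    have := x.2
    rw [MonoidHom.mem_ker] at this ⊢
    rw [D.fs, this, map_one]
  let sE : fM.ker →* fM.ker := (D.s.comp fM.ker.subtype).codRestrict _ hsE
  let φ : fM.ker →* fM.ker := MonoidHom.id _ * sE
  let ψ : fM.ker →* fM.ker := MonoidHom.id _ / sE
  obtain ⟨he, hr, hne⟩ := herbrand sE (fun x => Subtype.ext (D.ss x.1)) φ ψ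
    (fun x => rfl) (fun x => rfl)
  have memP : ∀ x, x ∈ ψ.ker ↔ D.s x.1 = x.1 := by
    intro x
    rw [MonoidHom.mem_ker]
    change x / sE x = 1 ↔ _
    rw [div_eq_one, Subtype.ext_iff, eq_comm]
    rfl
  have memQ : ∀ x, x ∈ φ.ker ↔ x.1 * D.s x.1 = 1 := by
    intro x
    rw [MonoidHom.mem_ker, Subtype.ext_iff]
    rfl
  have hfr : Module.finrank ℤ (Additive ψ.ker) = Module.finrank ℤ (Additive fF.ker) := by
    have hi1 : ∀ x : fF.ker, fM (D.i x) = 1 := by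
      intro x
      have := x.2
      rw [MonoidHom.mem_ker] at this
      rw [D.fi, this, map_one]
    let g : fF.ker →* ψ.ker :=
      { toFun := fun x => ⟨⟨D.i x, hi1 x⟩, (memP _).2 (D.si x)⟩
        map_one' := Subtype.ext (Subtype.ext (by simp))
        map_mul' := fun x y => Subtype.ext (Subtype.ext (by simp)) }
    have hg : Function.Bijective g := by
      constructor
      · intro x y h
        exact Subtype.ext (D.ii (congrArg (fun z => z.1.1) h))
      · intro x
        obtain ⟨y, hy⟩ := D.sfix x.1.1 ((memP _).1 x.2)
        have hy1 : y ∈ fF.ker := by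
          rw [MonoidHom.mem_ker]
          apply D.jj
          rw [← D.fi, hy, map_one]
          exact x.1.2
        exact ⟨⟨y, hy1⟩, Subtype.ext (Subtype.ext hy)⟩
    exact (LinearEquiv.finrank_eq
      (AddEquiv.toIntLinearEquiv (MulEquiv.toAdditive (MulEquiv.ofBijective g hg)))).symm
  have hH1 : 2 * φ.range.relIndex ψ.ker = ψ.range.relIndex φ.ker := by
    rw [hfr] at he hr
    have h3 : Module.finrank ℤ (Additive φ.ker) = Module.finrank ℤ (Additive fF.ker) + 1 := by omega
    rw [h3, pow_succ] at he
    have hpos : 0 < 2 ^ Module.finrank ℤ (Additive fF.ker) := by positivity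
    apply Nat.eq_of_mul_eq_mul_right hpos
    rw [← he]
    ring
  -- comparison of `H¹` with the capitulation kernel
  have hkerι : Nat.card D.iota.ker = ψ.range.relIndex φ.ker := by
    let G : Subgroup XM := D.j.range.comap fM
    have hG : ∀ γ : G, D.t (fM γ) = fM γ := by
      rintro ⟨γ, b, hb⟩
      change D.t (fM γ) = fM γ
      rw [← hb, D.tj]
    let g1 : G →* φ.ker :=
      { toFun := fun γ => ⟨⟨γ.1 / D.s γ.1, by
          rw [MonoidHom.mem_ker, map_div, D.fs, hG γ, div_self']⟩, by
          rw [memQ]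
          simp [D.ss]⟩
        map_one' := Subtype.ext (Subtype.ext (by simp))
        map_mul' := fun x y => Subtype.ext (Subtype.ext (by simp [mul_div_mul_comm])) }
    have hg1 : Function.Surjective g1 := by
      intro u
      obtain ⟨γ, hγ⟩ := D.h90 u.1.1 ((memQ _).1 u.2)
      have hu : fM u.1.1 = 1 := u.1.2
      have : D.t (fM γ) = fM γ := by
        rw [hγ, map_div, D.fs, div_eq_one] at hu
        exact hu.symm
      obtain ⟨b, hb⟩ := inv _ this
      exact ⟨⟨γ, b, hb⟩, Subtype.ext (Subtype.ext hγ.symm)⟩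
    let c1 : G →* φ.ker ⧸ (ψ.range.subgroupOf φ.ker) := (QuotientGroup.mk' _).comp g1
    have hc1 : Function.Surjective c1 := (QuotientGroup.mk'_surjective _).comp hg1
    let e := MonoidHom.ofInjective D.jj
    let g2 : G →* D.j.range := (fM.comp G.subtype).codRestrict _ (fun x => x.2)
    let c2 : G →* (IF ⧸ fF.range) :=
      (QuotientGroup.mk' fF.range).comp (e.symm.toMonoidHom.comp g2)
    have hc2 : ∀ (γ : G) (b : IF), D.j b = fM γ → c2 γ = QuotientGroup.mk' _ b := by
      intro γ b hb
      have : e.symm (g2 γ) = b := by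
        rw [MulEquiv.symm_apply_eq]
        exact Subtype.ext hb.symm
      simp [c2, this]
    have hrange : c2.range = D.iota.ker := by
      ext c
      constructor
      · rintro ⟨γ, rfl⟩
        obtain ⟨b, hb⟩ := γ.2
        rw [hc2 γ b hb, MonoidHom.mem_ker, iota_mk, QuotientGroup.mk'_apply,
          QuotientGroup.eq_one_iff, hb]
        exact ⟨_, rfl⟩
      · intro hc
        obtain ⟨b, rfl⟩ := QuotientGroup.mk'_surjective _ c
        rw [MonoidHom.mem_ker, iota_mk, QuotientGroup.mk'_apply, QuotientGroup.eq_one_iff] at hc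
        obtain ⟨γ, hγ⟩ := hc
        exact ⟨⟨γ, b, hγ.symm⟩, hc2 _ b hγ.symm⟩
    have hker : c1.ker = c2.ker := by
      ext γ
      obtain ⟨b, hb⟩ := γ.2
      rw [MonoidHom.mem_ker, MonoidHom.mem_ker, hc2 γ b hb]
      simp only [c1, MonoidHom.comp_apply, QuotientGroup.mk'_apply, QuotientGroup.eq_one_iff]
      rw [Subgroup.mem_subgroupOf]
      constructor
      · rintro ⟨w, hw⟩
        have hw' : w.1 / D.s w.1 = γ.1 / D.s γ.1 := congrArg Subtype.val hw
        have hfix : D.s (γ.1 / w.1) = γ.1 / w.1 := by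
          rw [map_div, div_eq_div_iff_mul_eq_mul, mul_comm, ← div_eq_div_iff_mul_eq_mul]
          rw [div_eq_div_iff_mul_eq_mul] at hw' ⊢
          rw [mul_comm, ← hw', mul_comm]
        obtain ⟨y, hy⟩ := D.sfix _ hfix
        refine ⟨y, ?_⟩
        apply D.jj
        have hw1 : fM w.1 = 1 := w.2
        rw [← D.fi, hy, map_div, hw1, div_one, hb]
      · rintro ⟨y, hy⟩
        have h5 : fM (γ.1 / D.i y) = 1 := by
          rw [map_div, D.fi, hy, hb, div_self']
        refine ⟨⟨γ.1 / D.i y, h5⟩, ?_⟩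
        apply Subtype.ext
        change γ.1 / D.i y / D.s (γ.1 / D.i y) = γ.1 / D.s γ.1
        rw [map_div, D.si, div_div_div_cancel_right]
    rw [← hrange, ← Subgroup.index_ker, ← hker, Subgroup.index_ker,
      MonoidHom.range_eq_top.2 hc1, Subgroup.card_top]
    rfl
  have hcard : Nat.card (IF ⧸ fF.range) = Nat.card D.iota.ker * Nat.card D.iota.range := by
    rw [← Subgroup.index_ker, Subgroup.card_mul_index]
  rw [hcard, hkerι, ← hH1]
  have hfact : Fact (Nat.Prime 2) := ⟨Nat.prime_two⟩
  by_cases he1 : φ.range.relIndex ψ.ker = 1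
  · rw [he1]
    suffices h : 2 ∣ Nat.card D.iota.range by
      obtain ⟨m, hm⟩ := h
      rw [hm]
      exact ⟨m, by ring⟩
    -- invariant classes come from the base
    let τ : (IM ⧸ fM.range) →* (IM ⧸ fM.range) := QuotientGroup.map _ _ D.t (by
      rintro _ ⟨x, rfl⟩
      exact ⟨D.s x, D.fs x⟩)
    have hτ : ∀ a, τ (QuotientGroup.mk' _ a) = QuotientGroup.mk' _ (D.t a) := fun a => rfl
    have hττ : ∀ c, τ (τ c) = c := by
      intro c
      obtain ⟨a, rfl⟩ := QuotientGroup.mk'_surjective _ c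
      rw [hτ, hτ, D.tt]
    have hinv : ∀ c, τ c = c → c ∈ D.iota.range := by
      intro c hc
      obtain ⟨a, rfl⟩ := QuotientGroup.mk'_surjective _ c
      have hc' : QuotientGroup.mk' fM.range (a / D.t a) = 1 := by
        rw [map_div, ← hτ, hc, div_self']
      rw [QuotientGroup.mk'_apply, QuotientGroup.eq_one_iff] at hc'
      obtain ⟨α, hα⟩ := hc'
      have hα1 : fM (α * D.s α) = 1 := by
        rw [map_mul, D.fs, hα, map_div, D.tt]
        simp
      have hmem : (⟨α * D.s α, hα1⟩ : fM.ker) ∈ ψ.ker := by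
        rw [memP]
        change D.s (α * D.s α) = α * D.s α
        rw [map_mul, D.ss, mul_comm]
      obtain ⟨v, hv⟩ := (Subgroup.relIndex_eq_one.1 he1) hmem
      have hv' : v.1 * D.s v.1 = α * D.s α := congrArg Subtype.val hv
      have hv1 : fM v.1 = 1 := v.2
      obtain ⟨γ, hγ⟩ := D.h90 (α / v.1) (by
        rw [map_div, div_mul_div_comm, hv', div_self'])
      have h6 : a / D.t a = fM γ / D.t (fM γ) := by
        rw [← D.fs, ← map_div, ← hγ, map_div, hv1, div_one, hα]
      have h7 : D.t (a / fM γ) = a / fM γ := by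
        rw [map_div, div_eq_div_iff_mul_eq_mul]
        rw [div_eq_div_iff_mul_eq_mul] at h6
        rw [mul_comm, ← h6.symm, mul_comm]
      obtain ⟨b, hb⟩ := inv _ h7
      refine ⟨QuotientGroup.mk' _ b, ?_⟩
      rw [iota_mk, hb, map_div]
      have : QuotientGroup.mk' fM.range (fM γ) = 1 := by
        rw [QuotientGroup.mk'_apply, QuotientGroup.eq_one_iff]
        exact ⟨_, rfl⟩
      rw [this, div_one]
    obtain ⟨c, hc⟩ := exists_prime_orderOf_dvd_card' (G := IM ⧸ fM.range) 2 h2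
    have hc2 : c ^ 2 = 1 := by rw [← hc, pow_orderOf_eq_one]
    have hc1 : c ≠ 1 := by
      rintro rfl
      simp at hc
    have hex : ∃ d : IM ⧸ fM.range, d ≠ 1 ∧ d ^ 2 = 1 ∧ τ d = d := by
      by_cases h8 : τ c = c
      · exact ⟨c, hc1, hc2, h8⟩
      · refine ⟨c * τ c, ?_, ?_, ?_⟩
        · intro h9
          apply h8
          have : c * τ c = c * c := by rw [h9, ← pow_two, hc2]
          exact mul_left_cancel this
        · rw [mul_pow, ← map_pow, hc2, map_one, mul_one]
        · rw [map_mul, hττ, mul_comm]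
    obtain ⟨d, hd1, hd2, hd3⟩ := hex
    have hd4 : orderOf (⟨d, hinv d hd3⟩ : D.iota.range) = 2 := by
      apply orderOf_eq_prime
      · exact Subtype.ext hd2
      · intro h
        exact hd1 (congrArg Subtype.val h)
    rw [← hd4]
    exact orderOf_dvd_natCard _
  · have hp : IsPGroup 2 D.iota.ker := by
      intro c
      exact ⟨1, Subtype.ext (by simpa using D.iota_ker_sq c.2)⟩
    obtain ⟨n, hn⟩ := IsPGroup.iff_card.1 hp
    rw [hkerι, ← hH1] at hn
    have hn2 : 2 ≤ n := by
      by_contra h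
      interval_cases n <;> omega
    rw [hn]
    exact Dvd.dvd.mul_right ((by norm_num : (4 : ℕ) ∣ 2 ^ 2).trans (pow_dvd_pow 2 hn2)) _

end QData

end Abstract

section Ideals
set_option linter.unusedSectionVars false
open scoped nonZeroDivisors

/-- The group of fractional ideals of a number field. -/
abbrev FI (F : Type*) [Field F] [NumberField F] := (FractionalIdeal (𝓞 F)⁰ F)ˣ

/-- Principal fractional ideals. -/
noncomputable abbrev prin (F : Type*) [Field F] [NumberField F] : Fˣ →* FI F :=
  toPrincipalIdeal (𝓞 F) F

variable {F M N : Type*} [Field F] [NumberField F] [Field M] [NumberField M] [Field N]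
  [NumberField N]

theorem mapRingHom_injective (φ : F →+* M) : Function.Injective (RingOfIntegers.mapRingHom φ) := by
  intro x y h
  apply RingOfIntegers.ext
  apply φ.injective
  have := congrArg (fun z : 𝓞 M => (z : M)) h
  simpa using this

theorem idealMap_aux (φ : F →+* M) :
    (𝓞 F)⁰ ≤ Submonoid.comap (RingOfIntegers.mapRingHom φ) (𝓞 M)⁰ :=
  nonZeroDivisors_le_comap_nonZeroDivisors_of_injective _ (mapRingHom_injective φ)

/-- Extension of fractional ideals along a homomorphism of number fields. -/
noncomputable def idealMap (φ : F →+* M) : FI F →* FI M :=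
  Units.map (FractionalIdeal.extendedHom' M (idealMap_aux φ)).toMonoidHom

theorem locMap_eq (φ : F →+* M) :
    (IsLocalization.map M (RingOfIntegers.mapRingHom φ) (idealMap_aux φ) : F →+* M) = φ := by
  apply IsLocalization.ringHom_ext (𝓞 F)⁰
  ext x
  simp

theorem coe_idealMap (φ : F →+* M) (a : FI F) :
    (idealMap φ a : FractionalIdeal (𝓞 M)⁰ M) =
      FractionalIdeal.extended M (idealMap_aux φ) (a : FractionalIdeal (𝓞 F)⁰ F) := rfl

theorem idealMap_prin (φ : F →+* M) (x : Fˣ) :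
    idealMap φ (prin F x) = prin M (Units.map φ.toMonoidHom x) := by
  apply Units.ext
  rw [coe_idealMap, coe_toPrincipalIdeal, coe_toPrincipalIdeal,
    FractionalIdeal.extended_spanSingleton, locMap_eq]
  rfl

theorem idealMap_comp (φ : F →+* M) (ψ : M →+* N) (a : FI F) :
    idealMap ψ (idealMap φ a) = idealMap (ψ.comp φ) a := by
  apply Units.ext
  rw [coe_idealMap, coe_idealMap, coe_idealMap, FractionalIdeal.extended_extended]
  rfl

theorem idealMap_id (a : FI F) : idealMap (RingHom.id F) a = a := by
  apply Units.ext
  rw [coe_idealMap, ← FractionalIdeal.coeToSubmodule_inj, FractionalIdeal.coe_extended_eq_span,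
    locMap_eq]
  have h : (⇑(RingHom.id F) '' ((a : FractionalIdeal (𝓞 F)⁰ F) : Set F)) =
      (((a : FractionalIdeal (𝓞 F)⁰ F) : Submodule (𝓞 F) F) : Set F) := by
    simp only [RingHom.coe_id, Set.image_id]
    rfl
  rw [h, Submodule.span_eq]

theorem idealMap_le_one (φ : F →+* M) (a : FI F)
    (h : (idealMap φ a : FractionalIdeal (𝓞 M)⁰ M) ≤ 1) :
    (a : FractionalIdeal (𝓞 F)⁰ F) ≤ 1 := by
  intro x hx
  have h1 : φ x ∈ (idealMap φ a : FractionalIdeal (𝓞 M)⁰ M) := by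
    rw [coe_idealMap, FractionalIdeal.mem_extended_iff, locMap_eq]
    exact Submodule.subset_span ⟨x, hx, rfl⟩
  have h2 := h h1
  rw [FractionalIdeal.mem_one_iff] at h2
  obtain ⟨y, hy⟩ := h2
  have h3 : IsIntegral ℤ (φ x) := by
    rw [← hy]
    exact RingOfIntegers.isIntegral_coe y
  have h4 : IsIntegral ℤ x := (isIntegral_algHom_iff φ.toIntAlgHom φ.injective).1 h3
  exact (FractionalIdeal.mem_one_iff _).2 ⟨⟨x, h4⟩, rfl⟩

theorem eq_one_of_le {a : FI F} (h1 : (a : FractionalIdeal (𝓞 F)⁰ F) ≤ 1)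
    (h2 : ((a⁻¹ : FI F) : FractionalIdeal (𝓞 F)⁰ F) ≤ 1) : a = 1 := by
  apply Units.ext
  apply le_antisymm h1
  calc (1 : FractionalIdeal (𝓞 F)⁰ F)
      = (a : FractionalIdeal (𝓞 F)⁰ F) * ((a⁻¹ : FI F) : FractionalIdeal (𝓞 F)⁰ F) := by
        rw [← Units.val_mul, mul_inv_cancel, Units.val_one]
    _ ≤ (a : FractionalIdeal (𝓞 F)⁰ F) * 1 := mul_le_mul_right h2 _
    _ = _ := mul_one _

theorem idealMap_injective (φ : F →+* M) : Function.Injective (idealMap φ) := by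
  rw [injective_iff_map_eq_one]
  intro a ha
  apply eq_one_of_le
  · apply idealMap_le_one φ
    rw [ha]; rfl
  · apply idealMap_le_one φ
    rw [map_inv, ha]; simp

theorem le_one_of_sq {a : FI F} (ha : a ^ 2 = 1) : (a : FractionalIdeal (𝓞 F)⁰ F) ≤ 1 := by
  intro x hx
  have h1 : x * x ∈ (a : FractionalIdeal (𝓞 F)⁰ F) * (a : FractionalIdeal (𝓞 F)⁰ F) :=
    FractionalIdeal.mul_mem_mul hx hx
  rw [← Units.val_mul, ← pow_two, ha, Units.val_one, FractionalIdeal.mem_one_iff] at h1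
  obtain ⟨y, hy⟩ := h1
  have h3 : IsIntegral ℤ (x ^ 2) := by
    rw [pow_two, ← hy]
    exact RingOfIntegers.isIntegral_coe y
  have h4 : IsIntegral ℤ x := IsIntegral.of_pow (by norm_num) h3
  exact (FractionalIdeal.mem_one_iff _).2 ⟨⟨x, h4⟩, rfl⟩

theorem FI_torsionfree (a : FI F) (ha : a ^ 2 = 1) : a = 1 :=
  eq_one_of_le (le_one_of_sq ha) (le_one_of_sq (by rw [inv_pow, ha, inv_one]))

/-- Integral ideals as fractional ideals. -/
noncomputable def ofId (I : Ideal (𝓞 F)) (hI : I ≠ ⊥) : FI F :=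
  Units.mk0 (I : FractionalIdeal (𝓞 F)⁰ F) (FractionalIdeal.coeIdeal_ne_zero.2 hI)

theorem map_ne_bot (φ : F →+* M) {I : Ideal (𝓞 F)} (hI : I ≠ ⊥) :
    I.map (RingOfIntegers.mapRingHom φ) ≠ ⊥ := by
  intro h
  apply hI
  rwa [Ideal.map_eq_bot_iff_of_injective (mapRingHom_injective φ)] at h

theorem idealMap_ofId (φ : F →+* M) (I : Ideal (𝓞 F)) (hI : I ≠ ⊥) :
    idealMap φ (ofId I hI) = ofId (I.map (RingOfIntegers.mapRingHom φ)) (map_ne_bot φ hI) := by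
  apply Units.ext
  rw [coe_idealMap]
  exact FractionalIdeal.extended_coeIdeal_eq_map M _ I

theorem ofId_mul (I J : Ideal (𝓞 F)) (hI : I ≠ ⊥) (hJ : J ≠ ⊥) :
    ofId (I * J) (mul_ne_zero hI hJ) = ofId I hI * ofId J hJ := by
  apply Units.ext
  exact FractionalIdeal.coeIdeal_mul I J

theorem ofId_pow (I : Ideal (𝓞 F)) (hI : I ≠ ⊥) (n : ℕ) :
    ofId (I ^ n) (pow_ne_zero n hI) = ofId I hI ^ n := by
  apply Units.ext
  exact FractionalIdeal.coeIdeal_pow _ F I n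

theorem ofId_inj {I J : Ideal (𝓞 F)} {hI : I ≠ ⊥} {hJ : J ≠ ⊥} (h : ofId I hI = ofId J hJ) :
    I = J := by
  have := congrArg Units.val h
  exact FractionalIdeal.coeIdeal_injective this

theorem ofId_congr {I J : Ideal (𝓞 F)} (h : I = J) (hI : I ≠ ⊥) :
    ofId I hI = ofId J (h ▸ hI) := by
  subst h; rfl

theorem ofId_span (x : 𝓞 F) (hx : (x : F) ≠ 0) (h : Ideal.span {x} ≠ ⊥) :
    ofId (Ideal.span {x}) h = prin F (Units.mk0 (x : F) hx) := by
  apply Units.ext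
  rw [coe_toPrincipalIdeal]
  exact FractionalIdeal.coeIdeal_span_singleton x

theorem exists_ofId (a : FI F) : ∃ (I : Ideal (𝓞 F)) (hI : I ≠ ⊥) (x : 𝓞 F) (hx : (x : F) ≠ 0),
    a * prin F (Units.mk0 (x : F) hx) = ofId I hI := by
  obtain ⟨x, I, hx, h⟩ := FractionalIdeal.exists_eq_spanSingleton_mul (a : FractionalIdeal (𝓞 F)⁰ F)
  have hx' : (x : F) ≠ 0 := by
    simpa using hx
  have h2 : (a : FractionalIdeal (𝓞 F)⁰ F) * FractionalIdeal.spanSingleton (𝓞 F)⁰ (x : F) = I := by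
    rw [h, mul_comm, ← mul_assoc, FractionalIdeal.spanSingleton_mul_spanSingleton]
    rw [mul_inv_cancel₀ hx']
    simp
  have hI : I ≠ ⊥ := by
    rintro rfl
    rw [FractionalIdeal.coeIdeal_bot] at h2
    have h3 := mul_ne_zero a.ne_zero (FractionalIdeal.spanSingleton_ne_zero_iff.2 hx')
    exact h3 h2
  refine ⟨I, hI, x, hx', ?_⟩
  apply Units.ext
  rw [Units.val_mul, coe_toPrincipalIdeal]
  exact h2

end Ideals

section QExtension
set_option linter.unusedSectionVars false
open scoped nonZeroDivisors

/-- A quadratic extension of number fields, with its nontrivial automorphism. -/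
structure QExt (F M : Type*) [Field F] [Field M] [Algebra F M] where
  σ : M →+* M
  ss : ∀ x, σ (σ x) = x
  si : ∀ x : F, σ (algebraMap F M x) = algebraMap F M x
  fix : ∀ x, σ x = x → ∃ y, algebraMap F M y = x
  δ : M
  hδ : δ ≠ 0
  sδ : σ δ = -δ

namespace QExt

variable {F M : Type*} [Field F] [NumberField F] [Field M] [NumberField M] [Algebra F M]
  (D : QExt F M)

/-- The action on integers. -/
noncomputable abbrev Oσ : 𝓞 M →+* 𝓞 M := RingOfIntegers.mapRingHom D.σ

/-- The inclusion of integers. -/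
noncomputable abbrev Oi (F M : Type*) [Field F] [Field M] [Algebra F M] : 𝓞 F →+* 𝓞 M :=
  RingOfIntegers.mapRingHom (algebraMap F M)

theorem Oss (x : 𝓞 M) : D.Oσ (D.Oσ x) = x := by
  apply RingOfIntegers.ext
  simp [D.ss]

theorem Ofix (x : 𝓞 M) (hx : D.Oσ x = x) : ∃ y, Oi F M y = x := by
  have h1 : D.σ (x : M) = x := by
    have := congrArg (fun z : 𝓞 M => (z : M)) hx
    simpa using this
  obtain ⟨y, hy⟩ := D.fix _ h1
  have h3 : IsIntegral ℤ (algebraMap F M y) := by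
    rw [hy]
    exact RingOfIntegers.isIntegral_coe x
  have h4 : IsIntegral ℤ y :=
    (isIntegral_algHom_iff (algebraMap F M).toIntAlgHom (algebraMap F M).injective).1 h3
  exact ⟨⟨y, h4⟩, RingOfIntegers.ext hy⟩

theorem σcomp : D.σ.comp (algebraMap F M) = algebraMap F M := RingHom.ext D.si

theorem σσ : D.σ.comp D.σ = RingHom.id M := RingHom.ext D.ss

theorem Oσi (x : 𝓞 F) : D.Oσ (Oi F M x) = Oi F M x := by
  apply RingOfIntegers.ext
  simp [D.si]

/-- Integral representatives of fractional ideals. -/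
theorem exists_rep (D : QExt F M) (a : FI M) : ∃ (I : Ideal (𝓞 M)) (hI : I ≠ ⊥) (c : Fˣ),
    a * idealMap (algebraMap F M) (prin F c) = ofId I hI := by
  obtain ⟨I, hI, x, hx, h⟩ := exists_ofId a
  obtain ⟨n, hn⟩ := D.Ofix (x * D.Oσ x) (by rw [map_mul, D.Oss, mul_comm])
  have hx0 : x ≠ 0 := by
    rintro rfl
    simp at hx
  have hσx : D.Oσ x ≠ 0 := by
    intro h0
    apply hx0
    rw [← D.Oss x, h0, map_zero]
  have hn0 : n ≠ 0 := by
    rintro rfl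
    rw [map_zero] at hn
    exact mul_ne_zero hx0 hσx hn.symm
  have hn0' : (n : F) ≠ 0 := by simpa using hn0
  have hs : Ideal.span {D.Oσ x} ≠ ⊥ := by
    simpa using hσx
  have hσx' : ((D.Oσ x : 𝓞 M) : M) ≠ 0 := by simpa using hx0
  refine ⟨I * Ideal.span {D.Oσ x}, mul_ne_zero hI hs, Units.mk0 (n : F) hn0', ?_⟩
  rw [ofId_mul _ _ hI hs, ← h, ofId_span _ hσx', mul_assoc, ← map_mul, idealMap_prin]
  congr 2
  apply Units.ext
  have := congrArg (fun z : 𝓞 M => (z : M)) hn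
  simpa using this

theorem norm_ideal (a : FI M) :
    ∃ b, a * idealMap D.σ a = idealMap (algebraMap F M) b := by
  suffices h : ∀ (I : Ideal (𝓞 M)) (hI : I ≠ ⊥), ∃ b,
      ofId I hI * idealMap D.σ (ofId I hI) = idealMap (algebraMap F M) b by
    obtain ⟨I, hI, c, hc⟩ := D.exists_rep a
    obtain ⟨b, hb⟩ := h I hI
    refine ⟨b / (prin F c) ^ 2, ?_⟩
    rw [map_div, ← hb, ← hc, map_mul, idealMap_comp, D.σcomp, map_pow, pow_two, eq_div_iff_mul_eq']
    ac_rfl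
  intro I hI
  obtain ⟨α, hα⟩ : ∃ α ∈ I, α ≠ 0 := by
    by_contra! h
    apply hI
    rw [eq_bot_iff]
    intro x hx
    simpa using h x hx
  obtain ⟨β, hβ⟩ := IsDedekindDomain.exists_eq_span_pair hα.1 hα.2
  set α' := D.Oσ α with hα'
  set β' := D.Oσ β with hβ'
  obtain ⟨u, hu⟩ := D.Ofix (α * α') (by rw [map_mul, hα', D.Oss, mul_comm])
  obtain ⟨z, hz⟩ := D.Ofix (β * β') (by rw [map_mul, hβ', D.Oss, mul_comm])
  obtain ⟨v, hv⟩ := D.Ofix (α * β' + β * α') (by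
    rw [map_add, map_mul, map_mul, hα', hβ', D.Oss, D.Oss]; ring)
  have hJ : I * I.map D.Oσ = Ideal.span {α * α', α * β', β * α', β * β'} := by
    rw [hβ, Ideal.map_span, Set.image_pair, Ideal.span_pair_mul_span_pair]
  have hJ0 : I * I.map D.Oσ ≠ ⊥ := mul_ne_zero hI (map_ne_bot _ hI)
  set I0 : Ideal (𝓞 F) := Ideal.span {u, v, z} with hI0
  have hmap : I0.map (Oi F M) = Ideal.span {α * α', α * β' + β * α', β * β'} := by
    rw [hI0, Ideal.map_span, Set.image_insert_eq, Set.image_pair, hu, hv, hz]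
  have key : I * I.map D.Oσ = I0.map (Oi F M) := by
    apply mul_right_cancel₀ hJ0
    rw [hmap, hJ]
    have m1 : α * α' ∈ Ideal.span {α * α', α * β', β * α', β * β'} := Ideal.subset_span (by simp)
    have m2 : α * β' ∈ Ideal.span {α * α', α * β', β * α', β * β'} := Ideal.subset_span (by simp)
    have m3 : β * α' ∈ Ideal.span {α * α', α * β', β * α', β * β'} := Ideal.subset_span (by simp)
    have m4 : β * β' ∈ Ideal.span {α * α', α * β', β * α', β * β'} := Ideal.subset_span (by simp)
    have n1 : α * α' ∈ Ideal.span {α * α', α * β' + β * α', β * β'} := Ideal.subset_span (by simp)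
    have n2 : α * β' + β * α' ∈ Ideal.span {α * α', α * β' + β * α', β * β'} :=
      Ideal.subset_span (by simp)
    have n3 : β * β' ∈ Ideal.span {α * α', α * β' + β * α', β * β'} := Ideal.subset_span (by simp)
    set J := Ideal.span {α * α', α * β', β * α', β * β'} with hJdef
    set S := Ideal.span {α * α', α * β' + β * α', β * β'} with hSdef
    have hSJ : S ≤ J := by
      rw [hSdef, Ideal.span_le]
      rintro x (rfl | rfl | rfl)
      · exact m1
      · exact J.add_mem m2 m3
      · exact m4
    apply le_antisymm
    · have e1 : ∀ x ∈ J, α * α' * x ∈ S * J := fun x hx => Ideal.mul_mem_mul n1 hx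
      have e4 : ∀ x ∈ J, β * β' * x ∈ S * J := fun x hx => Ideal.mul_mem_mul n3 hx
      have e23 : (α * β') * (β * α') ∈ S * J := by
        have := e1 _ m4
        convert this using 1
        ring
      have e22 : (α * β') * (α * β') ∈ S * J := by
        have := (S * J).sub_mem (Ideal.mul_mem_mul n2 m2) e23
        convert this using 1
        ring
      have e33 : (β * α') * (β * α') ∈ S * J := by
        have := (S * J).sub_mem (Ideal.mul_mem_mul n2 m3) e23
        convert this using 1
        ring
      have f1 : ∀ x ∈ J, x * (α * α') ∈ S * J := fun x hx => by rw [mul_comm x]; exact e1 x hx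
      have f4 : ∀ x ∈ J, x * (β * β') ∈ S * J := fun x hx => by rw [mul_comm x]; exact e4 x hx
      have e32 : (β * α') * (α * β') ∈ S * J := by rw [mul_comm (β * α')]; exact e23
      nth_rewrite 1 [hJdef]
      nth_rewrite 1 [hJdef]
      rw [Ideal.span_mul_span', Ideal.span_le]
      rintro _ ⟨x, hx, y, hy, rfl⟩
      rcases hx with rfl | rfl | rfl | rfl
      · exact e1 _ (Ideal.subset_span hy)
      · rcases hy with rfl | rfl | rfl | rfl
        · exact f1 _ m2
        · exact e22
        · exact e23
        · exact f4 _ m2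
      · rcases hy with rfl | rfl | rfl | rfl
        · exact f1 _ m3
        · exact e32
        · exact e33
        · exact f4 _ m3
      · exact e4 _ (Ideal.subset_span hy)
    · exact Ideal.mul_mono_left hSJ
  have hI00 : I0 ≠ ⊥ := by
    intro h
    apply hJ0
    rw [key, h, Ideal.map_bot]
  refine ⟨ofId I0 hI00, ?_⟩
  rw [idealMap_ofId, idealMap_ofId, ← ofId_mul]
  exact ofId_congr key _

/-- The formal data attached to a quadratic extension of number fields. -/
noncomputable def toQData : QData (prin F) (prin M) where
  i := Units.map (algebraMap F M).toMonoidHom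
  j := idealMap (algebraMap F M)
  s := Units.map D.σ.toMonoidHom
  t := idealMap D.σ
  fi x := (idealMap_prin _ x).symm
  fs x := (idealMap_prin _ x).symm
  ss x := Units.ext (D.ss x)
  tt a := by rw [idealMap_comp, D.σσ, idealMap_id]
  si x := Units.ext (D.si x)
  tj a := by rw [idealMap_comp, D.σcomp]
  ii := Units.map_injective (algebraMap F M).injective
  jj := idealMap_injective _
  sfix x hx := by
    obtain ⟨y, hy⟩ := D.fix x (congrArg Units.val hx)
    have hy0 : y ≠ 0 := by
      rintro rfl
      rw [map_zero] at hy
      exact x.ne_zero hy.symm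
    exact ⟨Units.mk0 y hy0, Units.ext hy⟩
  h90 x hx := by
    have hx' : (x : M) * D.σ x = 1 := congrArg Units.val hx
    by_cases h : (1 : M) + x = 0
    · refine ⟨Units.mk0 D.δ D.hδ, Units.ext ?_⟩
      have : (x : M) = -1 := by linear_combination h
      rw [Units.val_div_eq_div_val]
      change (x : M) = D.δ / D.σ D.δ
      rw [D.sδ, this, div_neg, div_self D.hδ]
    · refine ⟨Units.mk0 _ h, Units.ext ?_⟩
      rw [Units.val_div_eq_div_val]
      change (x : M) = (1 + x) / D.σ (1 + x)
      have h2 : D.σ (1 + x) ≠ 0 := by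
        rw [Ne, map_eq_zero]; exact h
      rw [eq_div_iff h2, map_add, map_one]
      linear_combination hx'
  norm := D.norm_ideal
  tf := FI_torsionfree

theorem map_eq_of_inv {I : Ideal (𝓞 M)} {hI : I ≠ ⊥} (h : idealMap D.σ (ofId I hI) = ofId I hI)
    {α : 𝓞 M} (hα : α ∈ I) : D.Oσ α ∈ I := by
  rw [idealMap_ofId] at h
  have := ofId_inj h
  rw [← this]
  exact Ideal.mem_map_of_mem _ hα

theorem mul_diff_mem {I : Ideal (𝓞 M)} (h : ∀ α ∈ I, D.Oσ α ∈ I) {α : 𝓞 M} (hα : α ∈ I)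
    (y : 𝓞 M) : α * (y - D.Oσ y) ∈ (I.comap (Oi F M)).map (Oi F M) := by
  have tr : ∀ β ∈ I, β + D.Oσ β ∈ (I.comap (Oi F M)).map (Oi F M) := by
    intro β hβ
    obtain ⟨b, hb⟩ := D.Ofix (β + D.Oσ β) (by rw [map_add, D.Oss, add_comm])
    rw [← hb]
    apply Ideal.mem_map_of_mem
    rw [Ideal.mem_comap, hb]
    exact I.add_mem hβ (h β hβ)
  have h1 := tr (α * y) (I.mul_mem_right _ hα)
  have h2 := Ideal.mul_mem_right (D.Oσ y) _ (tr α hα)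
  have h3 := Ideal.sub_mem _ h1 h2
  convert h3 using 1
  rw [map_mul]
  ring

theorem inv_of_unramified (y₁ y₂ c₁ c₂ : 𝓞 M)
    (h1 : c₁ * (y₁ - D.Oσ y₁) + c₂ * (y₂ - D.Oσ y₂) = 1) (a : FI M)
    (ha : idealMap D.σ a = a) : ∃ b, idealMap (algebraMap F M) b = a := by
  obtain ⟨I, hI, c, hc⟩ := D.exists_rep a
  have hinv : idealMap D.σ (ofId I hI) = ofId I hI := by
    rw [← hc, map_mul, ha, idealMap_comp, D.σcomp]
  have key : (I.comap (Oi F M)).map (Oi F M) = I := by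
    apply le_antisymm Ideal.map_comap_le
    intro α hα
    have e1 := D.mul_diff_mem (fun α hα => D.map_eq_of_inv hinv hα) hα y₁
    have e2 := D.mul_diff_mem (fun α hα => D.map_eq_of_inv hinv hα) hα y₂
    have := Ideal.add_mem _ (Ideal.mul_mem_left _ c₁ e1) (Ideal.mul_mem_left _ c₂ e2)
    convert this using 1
    linear_combination (-α) * h1
  have h0 : I.comap (Oi F M) ≠ ⊥ := by
    intro h
    apply hI
    rw [← key, h, Ideal.map_bot]
  refine ⟨ofId _ h0 / prin F c, ?_⟩
  rw [map_div, idealMap_ofId, ofId_congr key, ← hc]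
  simp

/-- Squares of invariant ideals in a ramified extension. -/
theorem inv_sq (P : Ideal (𝓞 M)) (hP : Prime P) (m : ℕ) (hPm : P ^ m = Ideal.span {2})
    (θ : 𝓞 M) (hθ : Prime (Ideal.span {θ})) (hσθ : D.Oσ θ = -θ) (T : Ideal (𝓞 F)) (hT : T ≠ ⊥)
    (hTP : T.map (Oi F M) = P ^ 2) (r : 𝓞 F) (hr : (r : F) ≠ 0) (hrθ : Oi F M r = θ ^ 2)
    (a : FI M) (ha : idealMap D.σ a = a) :
    ∃ (b : FI F) (k l : ℤ), a ^ 2 = idealMap (algebraMap F M)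
      (b ^ 2 * ofId T hT ^ k * prin F (Units.mk0 (r : F) hr) ^ l) := by
  obtain ⟨I, hI, c, hc⟩ := D.exists_rep a
  have hinv : idealMap D.σ (ofId I hI) = ofId I hI := by
    rw [← hc, map_mul, ha, idealMap_comp, D.σcomp]
  set I1 := (I.comap (Oi F M)).map (Oi F M) with hI1
  obtain ⟨B, hB⟩ : I ∣ I1 := Ideal.dvd_iff_le.2 Ideal.map_comap_le
  have hBd : B ∣ P ^ m * Ideal.span {θ} := by
    rw [hPm, Ideal.span_singleton_mul_span_singleton, ← mul_dvd_mul_iff_left hI, ← hB,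
      Ideal.dvd_iff_le, mul_comm, Ideal.span_singleton_mul_le_iff]
    intro α hα
    have := D.mul_diff_mem (fun α hα => D.map_eq_of_inv hinv hα) hα θ
    rw [hσθ] at this
    convert this using 1
    ring
  obtain ⟨B1, B2, h1, h2, hB12⟩ := exists_dvd_and_dvd_of_dvd_mul hBd
  obtain ⟨k, -, hk⟩ := (dvd_prime_pow hP m).1 h1
  obtain ⟨l, -, hl⟩ := (dvd_prime_pow hθ 1).1 (by simpa using h2)
  rw [associated_iff_eq] at hk hl
  subst hk hl
  have hP0 : P ≠ ⊥ := hP.ne_zero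
  have hθ0 : Ideal.span {θ} ≠ ⊥ := hθ.ne_zero
  have hB0 : B ≠ ⊥ := by
    rw [hB12]
    exact mul_ne_zero (pow_ne_zero _ hP0) (pow_ne_zero _ hθ0)
  have hI10 : I1 ≠ ⊥ := by
    rw [hB]
    exact mul_ne_zero hI hB0
  have h0 : I.comap (Oi F M) ≠ ⊥ := by
    intro h
    apply hI10
    rw [hI1, h, Ideal.map_bot]
  have e1 : idealMap (algebraMap F M) (ofId _ h0) =
      ofId I hI * (ofId P hP0 ^ k * ofId (Ideal.span {θ}) hθ0 ^ l) := by
    rw [idealMap_ofId, ← ofId_pow, ← ofId_pow, ← ofId_mul, ← ofId_mul]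
    exact ofId_congr (hB.trans (by rw [hB12])) _
  have e2 : idealMap (algebraMap F M) (ofId T hT) = ofId P hP0 ^ 2 := by
    rw [idealMap_ofId, ← ofId_pow]
    exact ofId_congr hTP _
  have e3 : idealMap (algebraMap F M) (prin F (Units.mk0 (r : F) hr)) =
      ofId (Ideal.span {θ}) hθ0 ^ 2 := by
    have hθ1 : (θ : M) ≠ 0 := by simpa using hθ0
    rw [ofId_span θ hθ1, idealMap_prin, ← map_pow]
    congr 1
    apply Units.ext
    have := congrArg (fun z : 𝓞 M => (z : M)) hrθ
    simpa using this
  have e4 : a = idealMap (algebraMap F M) (ofId _ h0 / prin F c) /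
      (ofId P hP0 ^ k * ofId (Ideal.span {θ}) hθ0 ^ l) := by
    rw [map_div, e1, ← hc, eq_div_iff_mul_eq', eq_div_iff_mul_eq']
    ac_rfl
  refine ⟨ofId _ h0 / prin F c, -(k : ℤ), -(l : ℤ), ?_⟩
  rw [map_mul, map_mul, map_zpow, map_zpow, e2, e3, map_pow]
  nth_rewrite 1 [e4]
  rw [div_pow, div_eq_mul_inv, mul_assoc, zpow_neg, zpow_neg, ← mul_inv, zpow_natCast, zpow_natCast,
    mul_pow, pow_right_comm, pow_right_comm _ l]

end QExt
end QExtension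

section UnitsSection

/-- The order of the two-torsion of the cokernel. -/
noncomputable def clTwo {X I : Type*} [CommGroup X] [CommGroup I] (f : X →* I) : ℕ :=
  Nat.card (powMonoidHom 2 : (I ⧸ f.range) →* (I ⧸ f.range)).ker

theorem mem_range_of_clTwo {X I : Type*} [CommGroup X] [CommGroup I] (f : X →* I)
    (h : clTwo f = 1) (a : I) (ha : a ^ 2 ∈ f.range) : a ∈ f.range := by
  have h1 := Subgroup.card_eq_one.1 h
  have h2 : QuotientGroup.mk' f.range a ∈
      (powMonoidHom 2 : (I ⧸ f.range) →* (I ⧸ f.range)).ker := by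
    rw [MonoidHom.mem_ker, powMonoidHom_apply, ← map_pow, QuotientGroup.mk'_apply,
      QuotientGroup.eq_one_iff]
    exact ha
  rw [h1, Subgroup.mem_bot, QuotientGroup.mk'_apply, QuotientGroup.eq_one_iff] at h2
  exact h2

open scoped nonZeroDivisors

variable (F : Type*) [Field F] [NumberField F]

theorem card_class : Nat.card (FI F ⧸ (prin F).range) = classNumber F := by
  rw [classNumber, ← Nat.card_eq_fintype_card]
  exact (Nat.card_congr (ClassGroup.equiv F).toEquiv).symm

instance finite_class : Finite (FI F ⧸ (prin F).range) :=
  Finite.of_equiv _ (ClassGroup.equiv (R := 𝓞 F) F).toEquiv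

theorem isIntegral_of_mem_ker {F : Type*} [Field F] [NumberField F] (x : Fˣ)
    (hx : prin F x = 1) : IsIntegral ℤ (x : F) := by
  have h := congrArg Units.val hx
  rw [coe_toPrincipalIdeal, Units.val_one] at h
  have h2 : (x : F) ∈ FractionalIdeal.spanSingleton (𝓞 F)⁰ (x : F) :=
    FractionalIdeal.mem_spanSingleton_self _ _
  rw [h, FractionalIdeal.mem_one_iff] at h2
  obtain ⟨y, hy⟩ := h2
  rw [← hy]
  exact RingOfIntegers.isIntegral_coe y

/-- The kernel of the principal ideal map is the unit group. -/
noncomputable def unitsEquiv : (𝓞 F)ˣ ≃* (prin F).ker := by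
  refine MulEquiv.ofBijective
    ((Units.map (algebraMap (𝓞 F) F).toMonoidHom).codRestrict (prin F).ker ?_) ⟨?_, ?_⟩
  · intro u
    rw [MonoidHom.mem_ker]
    apply Units.ext
    rw [coe_toPrincipalIdeal, Units.val_one]
    change FractionalIdeal.spanSingleton (𝓞 F)⁰ (algebraMap (𝓞 F) F u) = 1
    rw [← FractionalIdeal.coeIdeal_span_singleton, Ideal.span_singleton_eq_top.2 u.isUnit]
    exact FractionalIdeal.coeIdeal_top _
  · intro u v h
    have h1 := congrArg (fun z => (z.1 : F)) h
    apply Units.ext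
    exact RingOfIntegers.ext h1
  · rintro ⟨x, hx⟩
    rw [MonoidHom.mem_ker] at hx
    have h1 := isIntegral_of_mem_ker x hx
    have h2 := isIntegral_of_mem_ker x⁻¹ (by rw [map_inv, hx, inv_one])
    refine ⟨⟨⟨x, h1⟩, ⟨(x⁻¹ : Fˣ), h2⟩, ?_, ?_⟩, ?_⟩
    · apply RingOfIntegers.ext
      change (x : F) * ((x⁻¹ : Fˣ) : F) = 1
      simp
    · apply RingOfIntegers.ext
      change ((x⁻¹ : Fˣ) : F) * (x : F) = 1
      simp
    · apply Subtype.ext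
      apply Units.ext
      rfl

instance finite_ker : Module.Finite ℤ (Additive (prin F).ker) :=
  Module.Finite.equiv (AddEquiv.toIntLinearEquiv (MulEquiv.toAdditive (unitsEquiv F)))

theorem finrank_ker : Module.finrank ℤ (Additive (prin F).ker) = Units.rank F := by
  rw [← NumberField.Units.finrank_eq]
  exact (LinearEquiv.finrank_eq
    (AddEquiv.toIntLinearEquiv (MulEquiv.toAdditive (unitsEquiv F)))).symm

theorem card_units_two :
    Nat.card (powMonoidHom 2 : (prin F).ker →* (prin F).ker).ker = 2 := by
  have hm1 : prin F (-1) = 1 := by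
    apply FI_torsionfree
    rw [← map_pow, neg_one_sq, map_one]
  rw [Nat.card_eq_two_iff]
  refine ⟨1, ⟨⟨-1, hm1⟩, ?_⟩, ?_, ?_⟩
  · rw [MonoidHom.mem_ker]
    apply Subtype.ext
    simp
  · intro h
    have h1 := congrArg (fun z => (z.1.1 : F)) h
    simp only [OneMemClass.coe_one, Units.val_one, Units.val_neg] at h1
    have h2 : (2 : F) = 0 := by linear_combination h1
    exact two_ne_zero h2
  · rw [Set.eq_univ_iff_forall]
    intro x
    have h1 : x.1 ^ 2 = 1 := x.2
    have h2 : (x.1.1 : F) ^ 2 = 1 := congrArg (fun z => (z.1 : F)) h1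
    rcases sq_eq_one_iff.1 h2 with h | h
    · left
      exact Subtype.ext (Subtype.ext (Units.ext h))
    · right
      exact Subtype.ext (Subtype.ext (Units.ext h))

theorem selmer_index_nf :
    (powMonoidHom 2 : Fˣ →* Fˣ).range.relIndex (selmer (prin F)) =
      2 ^ (Units.rank F + 1) *
        clTwo (prin F) := by
  rw [selmer_index (prin F) FI_torsionfree, index_squares, finrank_ker, card_units_two, pow_succ,
    clTwo]

end UnitsSection

section Quadratic

section Gen
variable {F M : Type*} [Field F] [Field M] [Algebra F M] (δ : M) (d : F)

theorem quad_unique (hnot : ∀ a : F, algebraMap F M a ≠ δ) {a b a' b' : F}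
    (h : algebraMap F M a + algebraMap F M b * δ = algebraMap F M a' + algebraMap F M b' * δ) :
    a = a' ∧ b = b' := by
  have hb : b = b' := by
    by_contra hne
    have hne' : algebraMap F M (b - b') ≠ 0 := by
      rw [Ne, map_eq_zero, sub_eq_zero]; exact hne
    apply hnot ((a' - a) / (b - b'))
    rw [map_div₀, div_eq_iff hne', map_sub, map_sub]
    linear_combination -h
  refine ⟨?_, hb⟩
  subst hb
  exact (algebraMap F M).injective (add_right_cancel h)

/-- The quadratic extension data of `F(δ)`. -/
noncomputable def mkQ [CharZero M] (hδ : δ ^ 2 = algebraMap F M d)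
    (hnot : ∀ a : F, algebraMap F M a ≠ δ)
    (hgen : ∀ x : M, ∃ a b : F, x = algebraMap F M a + algebraMap F M b * δ) : QExt F M := by
  choose A B hAB using hgen
  have hAB' : ∀ a b : F, A (algebraMap F M a + algebraMap F M b * δ) = a ∧
      B (algebraMap F M a + algebraMap F M b * δ) = b := by
    intro a b
    exact quad_unique δ hnot (hAB _).symm
  let s : M → M := fun x => algebraMap F M (A x) - algebraMap F M (B x) * δ
  have hs : ∀ a b : F, s (algebraMap F M a + algebraMap F M b * δ) =
      algebraMap F M a - algebraMap F M b * δ := by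
    intro a b
    simp only [s]
    rw [(hAB' a b).1, (hAB' a b).2]
  have hs1 : ∀ a : F, s (algebraMap F M a) = algebraMap F M a := by
    intro a
    have := hs a 0
    simpa using this
  exact
  { σ :=
    { toFun := s
      map_one' := by
        have := hs1 1
        simpa using this
      map_zero' := by
        have := hs1 0
        simpa using this
      map_add' := by
        intro x y
        obtain ⟨a, b, rfl⟩ : ∃ a b : F, x = algebraMap F M a + algebraMap F M b * δ := ⟨_, _, hAB x⟩
        obtain ⟨a', b', rfl⟩ : ∃ a b : F, y = algebraMap F M a + algebraMap F M b * δ :=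
          ⟨_, _, hAB y⟩
        have := hs (a + a') (b + b')
        rw [hs, hs, ← sub_eq_zero]
        rw [← sub_eq_zero] at this
        rw [← this]
        simp only [map_add]
        have e : algebraMap F M a + algebraMap F M b * δ + (algebraMap F M a' + algebraMap F M b' * δ)
          = algebraMap F M a + algebraMap F M a' + (algebraMap F M b + algebraMap F M b') * δ := by
          ring
        rw [e]
        ring
      map_mul' := by
        intro x y
        obtain ⟨a, b, rfl⟩ : ∃ a b : F, x = algebraMap F M a + algebraMap F M b * δ := ⟨_, _, hAB x⟩
        obtain ⟨a', b', rfl⟩ : ∃ a b : F, y = algebraMap F M a + algebraMap F M b * δ :=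
          ⟨_, _, hAB y⟩
        have := hs (a * a' + b * b' * d) (a * b' + b * a')
        have e : (algebraMap F M a + algebraMap F M b * δ) *
            (algebraMap F M a' + algebraMap F M b' * δ)
          = algebraMap F M (a * a' + b * b' * d) + algebraMap F M (a * b' + b * a') * δ := by
          simp only [map_add, map_mul]
          linear_combination algebraMap F M b * algebraMap F M b' * hδ
        rw [e, this, hs, hs]
        simp only [map_add, map_mul]
        linear_combination (-algebraMap F M b * algebraMap F M b') * hδ }
    ss := by
      intro x
      obtain ⟨a, b, rfl⟩ : ∃ a b : F, x = algebraMap F M a + algebraMap F M b * δ := ⟨_, _, hAB x⟩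
      change s (s _) = _
      rw [hs]
      have := hs a (-b)
      rw [map_neg] at this
      rw [sub_eq_add_neg, ← neg_mul, this]
      ring
    si := hs1
    fix := by
      intro x
      obtain ⟨a, b, rfl⟩ : ∃ a b : F, x = algebraMap F M a + algebraMap F M b * δ := ⟨_, _, hAB x⟩
      intro h
      change s _ = _ at h
      rw [hs] at h
      have h2 : (2 : M) * (algebraMap F M b * δ) = 0 := by linear_combination -h
      have h3 : algebraMap F M b * δ = 0 := (mul_eq_zero.1 h2).resolve_left two_ne_zero
      exact ⟨a, by rw [h3, add_zero]⟩
    δ := δ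
    hδ := by
      intro h
      apply hnot 0
      rw [map_zero, h]
    sδ := by
      change s δ = -δ
      have := hs 0 1
      simpa using this }

theorem mkQ_σ [CharZero M] (hδ : δ ^ 2 = algebraMap F M d)
    (hnot : ∀ a : F, algebraMap F M a ≠ δ)
    (hgen : ∀ x : M, ∃ a b : F, x = algebraMap F M a + algebraMap F M b * δ) :
    (mkQ δ d hδ hnot hgen).σ δ = -δ := (mkQ δ d hδ hnot hgen).sδ

theorem quad_finrank (hnot : ∀ a : F, algebraMap F M a ≠ δ)
    (hgen : ∀ x : M, ∃ a b : F, x = algebraMap F M a + algebraMap F M b * δ) :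
    Module.finrank F M = 2 := by
  let g : (F × F) →ₗ[F] M :=
    (LinearMap.toSpanSingleton F M 1).coprod (LinearMap.toSpanSingleton F M δ)
  have hg : ∀ a b, g (a, b) = algebraMap F M a + algebraMap F M b * δ := by
    intro a b
    simp [g, Algebra.smul_def]
  have hb : Function.Bijective g := by
    constructor
    · rintro ⟨a, b⟩ ⟨a', b'⟩ h
      rw [hg, hg] at h
      obtain ⟨h1, h2⟩ := quad_unique δ hnot h
      rw [h1, h2]
    · intro x
      obtain ⟨a, b, h⟩ := hgen x
      exact ⟨(a, b), by rw [hg, h]⟩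
  rw [← (LinearEquiv.ofBijective g hb).finrank_eq]
  simp

end Gen

theorem prime_of_pow {F : Type*} [Field F] [NumberField F] (P : Ideal (𝓞 F)) (q n : ℕ)
    (hq : q.Prime) (hn : Module.finrank ℚ F = n) (h : P ^ n = Ideal.span {(q : 𝓞 F)}) :
    Prime P := by
  have hn0 : n ≠ 0 := by
    rw [← hn]
    exact Module.finrank_pos.ne'
  have h1 : Ideal.absNorm P ^ n = q ^ n := by
    rw [← map_pow, h, Ideal.absNorm_span_singleton]
    have : ((q : ℕ) : 𝓞 F) = algebraMap ℤ (𝓞 F) (q : ℤ) := by simp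
    rw [this, Algebra.norm_algebraMap, RingOfIntegers.rank, hn]
    simp
  have h2 : Ideal.absNorm P = q := Nat.pow_left_injective hn0 h1
  have h3 : P.IsPrime := Ideal.isPrime_of_irreducible_absNorm (by rw [h2]; exact hq)
  have h4 : P ≠ ⊥ := by
    rintro rfl
    rw [Ideal.absNorm_bot] at h2
    exact hq.ne_zero h2.symm
  exact Ideal.prime_of_isPrime h4 h3

theorem selmer_rat (a : ℚˣ) (ha : a ∈ selmer (prin ℚ)) : ∃ c : ℚˣ, a = c ^ 2 ∨ a = -c ^ 2 := by
  obtain ⟨q, hq⟩ := ha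
  have hq' : q ^ 2 = prin ℚ a := hq
  have h1 : q ∈ (prin ℚ).range := by
    have h := card_class ℚ
    rw [Rat.classNumber_eq] at h
    have h2 : (prin ℚ).range = ⊤ := Subgroup.index_eq_one.1 h
    rw [h2]
    trivial
  obtain ⟨c, rfl⟩ := h1
  refine ⟨c, ?_⟩
  have h2 : prin ℚ (a / c ^ 2) = 1 := by
    rw [map_div, map_pow, hq', div_self']
  have i1 := isIntegral_of_mem_ker _ h2
  have i2 := isIntegral_of_mem_ker (a / c ^ 2)⁻¹ (by rw [map_inv, h2, inv_one])
  obtain ⟨m, hm⟩ := IsIntegrallyClosed.isIntegral_iff.1 i1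
  obtain ⟨n, hn⟩ := IsIntegrallyClosed.isIntegral_iff.1 i2
  have hmn : m * n = 1 := by
    have : (algebraMap ℤ ℚ m) * algebraMap ℤ ℚ n = 1 := by rw [hm, hn]; simp
    rw [← map_mul] at this
    have h3 : ((m * n : ℤ) : ℚ) = 1 := this
    exact_mod_cast h3
  rcases Int.isUnit_iff.1 (IsUnit.of_mul_eq_one _ hmn) with h | h
  · left
    rw [h] at hm
    have : a / c ^ 2 = 1 := Units.ext (by rw [← hm]; simp)
    exact div_eq_one.1 this
  · right
    rw [h] at hm
    have : a / c ^ 2 = -1 := Units.ext (by rw [← hm]; simp)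
    rw [div_eq_iff_eq_mul] at this
    rw [this]
    simp

theorem no_neg_norm (p : ℕ) (hp : p.Prime) (hmod : p % 4 = 3) (u v c : ℚ) (hc : c ≠ 0)
    (h : u ^ 2 - p * v ^ 2 = -c ^ 2) : False := by
  have key : ∀ u v c : ℤ, c ≠ 0 → u ^ 2 + c ^ 2 = p * v ^ 2 → False := by
    intro u v c hc h
    have hv : v ≠ 0 := by
      rintro rfl
      have : 0 < c ^ 2 := by positivity
      nlinarith [sq_nonneg u]
    have h1 : p * v.natAbs ^ 2 = u.natAbs ^ 2 + c.natAbs ^ 2 := by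
      zify
      simp only [sq_abs]
      exact h.symm
    have h2 := (Nat.eq_sq_add_sq_iff (n := p * v.natAbs ^ 2)).1 ⟨_, _, h1⟩
    have hv0 : v.natAbs ^ 2 ≠ 0 := pow_ne_zero _ (Int.natAbs_ne_zero.2 hv)
    have h3 := h2 (q := p) (by
      rw [Nat.mem_primeFactors]
      exact ⟨hp, dvd_mul_right _ _, mul_ne_zero hp.ne_zero hv0⟩) hmod
    have : Fact p.Prime := ⟨hp⟩
    rw [padicValNat.mul hp.ne_zero hv0, padicValNat.self hp.one_lt,
      padicValNat.pow] at h3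
    rw [Nat.even_iff] at h3
    omega
  apply key (u.num * v.den * c.den) (v.num * u.den * c.den) (c.num * u.den * v.den)
  · simp [hc]
  · have hu := Rat.num_div_den u
    have hv := Rat.num_div_den v
    have hc := Rat.num_div_den c
    have du : (u.den : ℚ) ≠ 0 := by simp
    have dv : (v.den : ℚ) ≠ 0 := by simp
    have dc : (c.den : ℚ) ≠ 0 := by simp
    have eu : (u.num : ℚ) = u * u.den := (div_eq_iff du).1 hu
    have ev : (v.num : ℚ) = v * v.den := (div_eq_iff dv).1 hv
    have ec : (c.num : ℚ) = c * c.den := (div_eq_iff dc).1 hc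
    have : ((u.num * v.den * c.den) ^ 2 + (c.num * u.den * v.den) ^ 2 : ℚ) =
        p * (v.num * u.den * c.den) ^ 2 := by
      rw [eu, ev, ec]
      linear_combination (u.den * v.den * c.den : ℚ) ^ 2 * h
    exact_mod_cast this

theorem rank_bound {X : Type*} [CommGroup X] (S S' Sq : Subgroup X) (h1 : Sq ≤ S) (h2 : S ≤ S') :
    Sq.relIndex S ∣ Sq.relIndex S' :=
  ⟨_, (Subgroup.relIndex_mul_relIndex _ _ _ h1 h2).symm⟩

theorem sq_le_selmer {X I : Type*} [CommGroup X] [CommGroup I] (f : X →* I) :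
    (powMonoidHom 2 : X →* X).range ≤ selmer f := by
  rintro _ ⟨x, rfl⟩
  exact ⟨f x, by simp⟩

theorem relIndex_step {X : Type*} [CommGroup X] (Sq H : Subgroup X) (hle : Sq ≤ H)
    (hSq : ∀ x, x ^ 2 ∈ Sq) (x : X) (n : ℕ) (hn : Sq.relIndex H ∣ 2 ^ n) :
    Sq.relIndex (H ⊔ Subgroup.zpowers x) ∣ 2 ^ (n + 1) := by
  rw [← Subgroup.relIndex_mul_relIndex Sq H _ hle le_sup_left, pow_succ]
  exact mul_dvd_mul hn (relIndex_sup_zpowers_dvd H x (hle (hSq x)))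

end Quadratic

section Arith

theorem ideal_sq_k {A : Type*} [CommRing A] (R k₀ : A) (h : R ^ 2 = 16 * k₀ - 1) :
    (Ideal.span {2, 1 - R}) ^ 2 = Ideal.span {(2 : A)} := by
  apply le_antisymm
  · rw [pow_two, Ideal.span_pair_mul_span_pair, Ideal.span_le]
    intro x hx
    simp only [Set.mem_insert_iff, Set.mem_singleton_iff] at hx
    rw [SetLike.mem_coe, Ideal.mem_span_singleton]
    rcases hx with rfl | rfl | rfl | rfl
    · exact ⟨2, rfl⟩
    · exact ⟨1 - R, rfl⟩
    · exact ⟨1 - R, by ring⟩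
    · exact ⟨8 * k₀ - R, by linear_combination h⟩
  · rw [Ideal.span_singleton_le_iff_mem]
    have h2 : (2 : A) ∈ Ideal.span {2, 1 - R} := Ideal.subset_span (by simp)
    have h3 : (1 - R : A) ∈ Ideal.span {2, 1 - R} := Ideal.subset_span (by simp)
    rw [pow_two]
    have e : (2 : A) = 2 * (1 - R) - (1 - R) * (1 - R) + 4 * k₀ * (2 * 2) := by
      linear_combination h
    have h4 := Ideal.add_mem _ (Ideal.sub_mem _ (Ideal.mul_mem_mul h2 h3)
      (Ideal.mul_mem_mul h3 h3)) (Ideal.mul_mem_left _ (4 * k₀) (Ideal.mul_mem_mul h2 h2))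
    rwa [← e] at h4

theorem ideal_sq_K {A : Type*} [CommRing A] (R S k₀ : A) (h : R ^ 2 = 16 * k₀ - 1)
    (hS : S ^ 2 = R) :
    (Ideal.span {2, 1 - S}) ^ 2 = Ideal.span {(2 : A), 1 - R} := by
  have h2 : (2 : A) ∈ Ideal.span {2, 1 - S} := Ideal.subset_span (by simp)
  have h3 : (1 - S : A) ∈ Ideal.span {2, 1 - S} := Ideal.subset_span (by simp)
  have h2' : (2 : A) ∈ Ideal.span {2, 1 - R} := Ideal.subset_span (by simp)
  have h3' : (1 - R : A) ∈ Ideal.span {2, 1 - R} := Ideal.subset_span (by simp)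
  apply le_antisymm
  · rw [pow_two, Ideal.span_pair_mul_span_pair, Ideal.span_le]
    intro x hx
    simp only [Set.mem_insert_iff, Set.mem_singleton_iff] at hx
    rw [SetLike.mem_coe]
    rcases hx with rfl | rfl | rfl | rfl
    · exact Ideal.mul_mem_left _ _ h2'
    · exact Ideal.mul_mem_right _ _ h2'
    · exact Ideal.mul_mem_left _ _ h2'
    · have e : (1 - S) * (1 - S) = (1 - S) * 2 - (1 - R) := by linear_combination hS
      rw [e]
      exact Ideal.sub_mem _ (Ideal.mul_mem_left _ _ h2') h3'
  · have hR : 1 - R ∈ (Ideal.span {2, 1 - S}) ^ 2 := by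
      rw [pow_two]
      have e : 1 - R = 2 * (1 - S) - (1 - S) * (1 - S) := by linear_combination hS
      rw [e]
      exact Ideal.sub_mem _ (Ideal.mul_mem_mul h2 h3) (Ideal.mul_mem_mul h3 h3)
    rw [Ideal.span_le]
    intro x hx
    simp only [Set.mem_insert_iff, Set.mem_singleton_iff] at hx
    rw [SetLike.mem_coe]
    rcases hx with rfl | rfl
    · have e : (2 : A) = (2 - (1 - R)) * (1 - R) + 4 * k₀ * (2 * 2) := by linear_combination h
      rw [pow_two] at hR ⊢
      have h4 := Ideal.add_mem _ (Ideal.mul_mem_left _ (2 - (1 - R)) hR)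
        (Ideal.mul_mem_left _ (4 * k₀) (Ideal.mul_mem_mul h2 h2))
      rwa [← e] at h4
    · exact hR

/-- The map on unit groups of fields. -/
noncomputable abbrev umap {F M : Type*} [Field F] [Field M] (φ : F →+* M) : Fˣ →* Mˣ :=
  Units.map φ.toMonoidHom

theorem descent_ram {F M : Type*} [Field F] [NumberField F] [Field M] [NumberField M] [Algebra F M]
    (D : QExt F M) (P : Ideal (𝓞 M)) (hP : Prime P) (m : ℕ) (hPm : P ^ m = Ideal.span {2})
    (θ : 𝓞 M) (hθ : Prime (Ideal.span {θ})) (hσθ : D.Oσ θ = -θ) (T : Ideal (𝓞 F)) (hT : T ≠ ⊥)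
    (hTP : T.map (QExt.Oi F M) = P ^ 2) (r : 𝓞 F) (hr : (r : F) ≠ 0)
    (hrθ : QExt.Oi F M r = θ ^ 2) (τ : Fˣ) (hτ : ofId T hT = prin F τ) (a : Mˣ)
    (ha : a ∈ selmer (prin M)) (c : Fˣ)
    (hc : a * umap D.σ a = umap (algebraMap F M) (c ^ 2)) :
    ∃ (y : Mˣ) (d : Fˣ) (k : ℤ), d ∈ selmer (prin F) ∧
      a = y ^ 2 * umap (algebraMap F M) (d * τ ^ k) := by
  obtain ⟨y, d, q, h1, h2, h3⟩ := D.toQData.descent ha hc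
  obtain ⟨b, k, l, h4⟩ := D.inv_sq P hP m hPm θ hθ hσθ T hT hTP r hr hrθ q h3
  have h5 : prin F d = b ^ 2 * prin F τ ^ k * prin F (Units.mk0 (r : F) hr) ^ l := by
    rw [← hτ]
    apply idealMap_injective (algebraMap F M)
    rw [← h4, ← h2]
    rfl
  have hθ0 : (θ : M) ≠ 0 := by
    intro h0
    apply hr
    have := congrArg (fun z : 𝓞 M => (z : M)) hrθ
    have h6 : algebraMap F M (r : F) = (θ : M) ^ 2 := by simpa using this
    rw [h0, zero_pow two_ne_zero, map_eq_zero] at h6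
    exact h6
  have hθr : umap (algebraMap F M) (Units.mk0 (r : F) hr) = (Units.mk0 (θ : M) hθ0) ^ 2 := by
    apply Units.ext
    have := congrArg (fun z : 𝓞 M => (z : M)) hrθ
    simpa using this
  refine ⟨y * (Units.mk0 (θ : M) hθ0) ^ l, d / (τ ^ k * (Units.mk0 (r : F) hr) ^ l), k, ?_, ?_⟩
  · refine ⟨b, ?_⟩
    rw [map_div, h5, map_mul, map_zpow, map_zpow]
    simp only [powMonoidHom_apply]
    rw [eq_div_iff_mul_eq', mul_assoc]
  · rw [h1]
    have h7 : D.toQData.i d = umap (algebraMap F M) d := rfl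
    have h8 : ((Units.mk0 (θ : M) hθ0) ^ l) ^ 2 =
        umap (algebraMap F M) (Units.mk0 (r : F) hr ^ l) := by
      rw [map_zpow, hθr, ← zpow_natCast, ← zpow_natCast, zpow_comm]
    rw [h7, mul_pow, h8, mul_assoc, ← map_mul]
    congr 2
    rw [eq_comm, div_mul_eq_mul_div, mul_div_assoc', div_eq_iff_eq_mul, mul_left_comm,
      mul_comm (τ ^ k)]

end Arith

section KStep

/-- The unit `2`. -/
noncomputable abbrev twoU (F : Type*) [Field F] [CharZero F] : Fˣ := Units.mk0 2 two_ne_zero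

theorem isIntegral_of_sq {F : Type*} [Field F] {x : F} {y : F} (h : x ^ 2 = y)
    (hy : IsIntegral ℤ y) : IsIntegral ℤ x :=
  IsIntegral.of_pow two_pos (by rw [h]; exact hy)

theorem isIntegral_nat {F : Type*} [Field F] (n : ℕ) : IsIntegral ℤ (n : F) := by
  have := isIntegral_algebraMap (R := ℤ) (A := F) (x := (n : ℤ))
  simpa using this

theorem exists_k0 {p : ℕ} (hmod : p % 16 = 15) : ∃ k₀ : ℕ, p + 1 = 16 * k₀ :=
  ⟨p / 16 + 1, by omega⟩

section kfield
variable {k : Type*} [Field k] [NumberField k]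

theorem selmer_k
    {p : ℕ} (hp : p.Prime) (hmod : p % 16 = 15)
    (rp : k) (hrp : rp ^ 2 = p) (hnot : ∀ a : ℚ, algebraMap ℚ k a ≠ rp)
    (hgen : ∀ x : k, ∃ a b : ℚ, x = algebraMap ℚ k a + algebraMap ℚ k b * rp)
    (a : kˣ) (ha : a ∈ selmer (prin k)) :
    ∃ (c : kˣ) (e m : ℤ), a = c ^ 2 * (-1) ^ e * twoU k ^ m := by
  obtain ⟨k₀, hk₀⟩ := exists_k0 hmod
  have hrp' : rp ^ 2 = algebraMap ℚ k (p : ℚ) := by rw [hrp]; simp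
  let D := mkQ rp (p : ℚ) hrp' hnot hgen
  have hσ : D.σ rp = -rp := mkQ_σ rp (p : ℚ) hrp' hnot hgen
  have hfin := quad_finrank rp hnot hgen
  let R : 𝓞 k := ⟨rp, isIntegral_of_sq hrp (isIntegral_nat p)⟩
  have hR : R ^ 2 = (p : 𝓞 k) := by
    apply RingOfIntegers.ext
    change algebraMap (𝓞 k) k (R ^ 2) = algebraMap (𝓞 k) k (p : 𝓞 k)
    rw [map_pow, map_natCast]
    exact hrp
  have hR16 : R ^ 2 = 16 * (k₀ : 𝓞 k) - 1 := by
    rw [hR]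
    have := congrArg (fun n : ℕ => (n : 𝓞 k)) hk₀
    push_cast at this
    linear_combination this
  have hP2 := ideal_sq_k R (k₀ : 𝓞 k) hR16
  have hP : Prime (Ideal.span {2, 1 - R}) :=
    prime_of_pow _ 2 2 Nat.prime_two hfin (by simpa using hP2)
  have hRp : Prime (Ideal.span {R}) :=
    prime_of_pow _ p 2 hp hfin (by rw [Ideal.span_singleton_pow, hR])
  have hσR : D.Oσ R = -R := by
    apply RingOfIntegers.ext
    change D.σ rp = algebraMap (𝓞 k) k (-R)
    rw [map_neg]
    exact hσ
  have hT : Ideal.span {(2 : 𝓞 ℚ)} ≠ ⊥ := by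
    rw [Ne, Ideal.span_singleton_eq_bot]
    exact two_ne_zero
  have h2c : ((2 : 𝓞 ℚ) : ℚ) = 2 := map_ofNat (algebraMap (𝓞 ℚ) ℚ) 2
  have hpc : ((p : 𝓞 ℚ) : ℚ) = p := by simp
  have hp0 : (p : ℚ) ≠ 0 := by exact_mod_cast hp.ne_zero
  -- the norm
  obtain ⟨n, hn⟩ := D.toQData.exists_norm a
  have hn' : a * umap D.σ a = umap (algebraMap ℚ k) n := hn
  have hnS : n ∈ selmer (prin ℚ) := by
    obtain ⟨q, hq⟩ := ha
    obtain ⟨b, hb⟩ := D.toQData.norm q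
    exact ⟨b, (D.toQData.norm_ideal hn hb hq.symm).symm⟩
  obtain ⟨c, hc⟩ := selmer_rat n hnS
  have hc2 : n = c ^ 2 := by
    rcases hc with hc | hc
    · exact hc
    · exfalso
      obtain ⟨u, v, huv⟩ := hgen (a : k)
      refine no_neg_norm p hp (by omega) u v (c : ℚ) c.ne_zero ?_
      apply (algebraMap ℚ k).injective
      have h1 := congrArg Units.val hn'
      rw [hc] at h1
      have h2 : (a : k) * D.σ (a : k) = algebraMap ℚ k (-(c : ℚ) ^ 2) := by simpa using h1
      rw [huv, map_add, map_mul, D.si, D.si, hσ] at h2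
      rw [← h2]
      simp only [map_sub, map_mul, map_pow]
      rw [← hrp']
      ring
  rw [hc2] at hn'
  obtain ⟨y, d, m, hd, had⟩ := descent_ram D _ hP 2 hP2 R hRp hσR (Ideal.span {2}) hT
    (by rw [hP2, Ideal.map_span, Set.image_singleton, map_ofNat]) (p : 𝓞 ℚ) (by rw [hpc]; exact hp0) (by rw [hR]; simp)
    (twoU ℚ) (by
      rw [ofId_span 2 (by rw [h2c]; exact two_ne_zero)]
      congr 1) a ha c hn'
  have h2m : umap (algebraMap ℚ k) (twoU ℚ) = twoU k := by
    apply Units.ext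
    simp
  obtain ⟨f, hf⟩ := selmer_rat d hd
  rcases hf with hf | hf
  · refine ⟨y * umap (algebraMap ℚ k) f, 0, m, ?_⟩
    rw [had, hf, map_mul, map_zpow, h2m, map_pow, mul_pow, zpow_zero, mul_one, mul_assoc]
  · refine ⟨y * umap (algebraMap ℚ k) f, 1, m, ?_⟩
    have h3 : umap (algebraMap ℚ k) (-f ^ 2) = (umap (algebraMap ℚ k) f) ^ 2 * (-1) := by
      apply Units.ext
      simp
    rw [had, hf, map_mul, map_zpow, h2m, h3, mul_pow, zpow_one]
    simp only [mul_assoc]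

theorem clTwo_k
    {p : ℕ} (hp : p.Prime) (hmod : p % 16 = 15)
    (rp : k) (hrp : rp ^ 2 = p) (hnot : ∀ a : ℚ, algebraMap ℚ k a ≠ rp)
    (hgen : ∀ x : k, ∃ a b : ℚ, x = algebraMap ℚ k a + algebraMap ℚ k b * rp)
    (hrank : 1 ≤ Units.rank k) : clTwo (prin k) = 1 := by
  have h := selmer_index_nf k
  set Sq := (powMonoidHom 2 : kˣ →* kˣ).range with hSq
  have hsq : ∀ x : kˣ, x ^ 2 ∈ Sq := fun x => ⟨x, rfl⟩
  have h1 : Sq.relIndex (Sq ⊔ Subgroup.zpowers (-1)) ∣ 2 ^ 1 :=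
    relIndex_step Sq Sq le_rfl hsq _ 0 (by simp)
  have h2 := relIndex_step Sq _ le_sup_left hsq (twoU k) 1 h1
  have h3 : selmer (prin k) ≤ Sq ⊔ Subgroup.zpowers (-1) ⊔ Subgroup.zpowers (twoU k) := by
    intro a ha
    obtain ⟨c, e, m, rfl⟩ := selmer_k hp hmod rp hrp hnot hgen a ha
    exact Subgroup.mul_mem_sup (Subgroup.mul_mem_sup (hsq c) ⟨e, rfl⟩) ⟨m, rfl⟩
  have h4 := (rank_bound _ _ _ (sq_le_selmer (prin k)) h3).trans h2
  rw [h] at h4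
  have h5 : 2 ^ 2 * clTwo (prin k) ∣ 2 ^ 2 * 1 := by
    refine dvd_trans (mul_dvd_mul_right (pow_dvd_pow 2 ?_) _) h4
    omega
  exact Nat.dvd_one.1 (Nat.dvd_of_mul_dvd_mul_left (by norm_num) h5)

end kfield
end KStep

section KStep2

/-- The tower `ℚ ⊂ k = ℚ(√p) ⊂ K = k(⁴√p)`. -/
structure TowerK (k K : Type*) [Field k] [Field K] [CharZero k] [Algebra k K] (p : ℕ) where
  hp : p.Prime
  hmod : p % 16 = 15
  rp : k
  hrp : rp ^ 2 = p
  hnot : ∀ a : ℚ, algebraMap ℚ k a ≠ rp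
  hgen : ∀ x : k, ∃ a b : ℚ, x = algebraMap ℚ k a + algebraMap ℚ k b * rp
  θ : K
  hθ : θ ^ 2 = algebraMap k K rp
  hnot' : ∀ a : k, algebraMap k K a ≠ θ
  hgen' : ∀ x : K, ∃ a b : k, x = algebraMap k K a + algebraMap k K b * θ
  ψ : k →+* ℝ
  hψ : ψ rp < 0

namespace TowerK
variable {k K : Type*} [Field k] [NumberField k] [Field K] [NumberField K] [Algebra k K] {p : ℕ}
  (T : TowerK k K p)

/-- The quadratic extension `K / k`. -/
noncomputable def D : QExt k K := mkQ T.θ T.rp T.hθ T.hnot' T.hgen'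

theorem D_θ : T.D.σ T.θ = -T.θ := mkQ_σ T.θ T.rp T.hθ T.hnot' T.hgen'

theorem finrank_K (T : TowerK k K p) : Module.finrank ℚ K = 4 := by
  rw [← Module.finrank_mul_finrank ℚ k K, quad_finrank T.rp T.hnot T.hgen,
    quad_finrank T.θ T.hnot' T.hgen']

theorem norm_selmer (T : TowerK k K p) (a : Kˣ) (ha : a ∈ selmer (prin K)) :
    ∃ c : kˣ, a * umap T.D.σ a = umap (algebraMap k K) (c ^ 2) ∨
      a * umap T.D.σ a = umap (algebraMap k K) (c ^ 2 * twoU k) := by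
  obtain ⟨n, hn⟩ := T.D.toQData.exists_norm a
  have hn' : a * umap T.D.σ a = umap (algebraMap k K) n := hn
  have hnS : n ∈ selmer (prin k) := by
    obtain ⟨q, hq⟩ := ha
    obtain ⟨b, hb⟩ := T.D.toQData.norm q
    exact ⟨b, (T.D.toQData.norm_ideal hn hb hq.symm).symm⟩
  obtain ⟨c, e, m, hc⟩ := selmer_k T.hp T.hmod T.rp T.hrp T.hnot T.hgen n hnS
  have hpos : 0 < T.ψ (n : k) := by
    obtain ⟨u, v, huv⟩ := T.hgen' (a : K)
    have h1 := congrArg Units.val hn'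
    have h2 : (a : K) * T.D.σ (a : K) = algebraMap k K n := by simpa using h1
    have h3 : (n : k) = u ^ 2 - T.rp * v ^ 2 := by
      apply (algebraMap k K).injective
      rw [← h2, huv, map_add, map_mul, T.D.si, T.D.si, T.D_θ, map_sub, map_mul, map_pow, map_pow,
        ← T.hθ]
      ring
    have h4 : T.ψ (n : k) ≠ 0 := by
      rw [Ne, map_eq_zero]
      exact n.ne_zero
    refine lt_of_le_of_ne ?_ h4.symm
    rw [h3, map_sub, map_mul, map_pow, map_pow]
    nlinarith [sq_nonneg (T.ψ u), sq_nonneg (T.ψ v), T.hψ]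
  have he : n = c ^ 2 * twoU k ^ m := by
    rcases Int.even_or_odd e with h | h
    · rw [hc, h.neg_one_zpow, mul_one]
    · exfalso
      rw [hc, h.neg_one_zpow] at hpos
      have h5 : T.ψ ((c ^ 2 * -1 * twoU k ^ m : kˣ) : k) = -(T.ψ (c : k)) ^ 2 * (2 : ℝ) ^ m := by
        simp only [Units.val_mul, Units.val_pow_eq_pow_val, Units.val_neg, Units.val_one,
          Units.val_zpow_eq_zpow_val, Units.val_mk0, map_mul, map_pow, map_neg, map_one, map_zpow₀]
        rw [map_ofNat]
        ring
      rw [h5] at hpos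
      have : (0 : ℝ) < 2 ^ m := by positivity
      nlinarith [sq_nonneg (T.ψ (c : k)), mul_nonneg (sq_nonneg (T.ψ (c : k))) this.le]
  rw [he] at hn'
  rcases Int.even_or_odd' m with ⟨t, h | h⟩
  · refine ⟨c * twoU k ^ t, Or.inl ?_⟩
    rw [hn', h, mul_pow, mul_comm 2, zpow_mul]
    rfl
  · refine ⟨c * twoU k ^ t, Or.inr ?_⟩
    rw [hn', h, mul_pow, mul_comm 2, zpow_add, zpow_mul, zpow_one, mul_assoc]
    rfl

theorem exists_tau (T : TowerK k K p) (hrank : 1 ≤ Units.rank k) : ∃ τ : kˣ, ∀ a ∈ selmer (prin K),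
    ∀ c : kˣ, a * umap T.D.σ a = umap (algebraMap k K) (c ^ 2) →
    ∃ (y : Kˣ) (d : kˣ) (m : ℤ), d ∈ selmer (prin k) ∧
      a = y ^ 2 * umap (algebraMap k K) (d * τ ^ m) := by
  obtain ⟨k₀, hk₀⟩ := exists_k0 T.hmod
  let R : 𝓞 k := ⟨T.rp, isIntegral_of_sq T.hrp (isIntegral_nat p)⟩
  have hR : R ^ 2 = (p : 𝓞 k) := by
    apply RingOfIntegers.ext
    change algebraMap (𝓞 k) k (R ^ 2) = algebraMap (𝓞 k) k (p : 𝓞 k)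
    rw [map_pow, map_natCast]
    exact T.hrp
  have hR16 : R ^ 2 = 16 * (k₀ : 𝓞 k) - 1 := by
    rw [hR]
    have := congrArg (fun n : ℕ => (n : 𝓞 k)) hk₀
    push_cast at this
    linear_combination this
  have hP2 := ideal_sq_k R (k₀ : 𝓞 k) hR16
  have hPk0 : Ideal.span {2, 1 - R} ≠ ⊥ := by
    intro h
    rw [h, pow_two, Ideal.mul_bot, eq_comm, Ideal.span_singleton_eq_bot] at hP2
    exact two_ne_zero hP2
  have h2c : ((2 : 𝓞 k) : k) = 2 := map_ofNat (algebraMap (𝓞 k) k) 2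
  have hτ : ofId _ hPk0 ∈ (prin k).range := by
    apply mem_range_of_clTwo _ (clTwo_k T.hp T.hmod T.rp T.hrp T.hnot T.hgen hrank)
    rw [← ofId_pow, ofId_congr hP2, ofId_span 2 (by rw [h2c]; exact two_ne_zero)]
    exact ⟨_, rfl⟩
  obtain ⟨τ, hτ⟩ := hτ
  refine ⟨τ, fun a ha c hc => ?_⟩
  have hint : IsIntegral ℤ (algebraMap k K T.rp) :=
    IsIntegral.map (algebraMap k K).toIntAlgHom (isIntegral_of_sq T.hrp (isIntegral_nat p))
  let Θ : 𝓞 K := ⟨T.θ, isIntegral_of_sq T.hθ hint⟩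
  have hΘ : QExt.Oi k K R = Θ ^ 2 := by
    apply RingOfIntegers.ext
    change algebraMap k K T.rp = algebraMap (𝓞 K) K (Θ ^ 2)
    rw [map_pow]
    exact T.hθ.symm
  have hΘ16 : (QExt.Oi k K R) ^ 2 = 16 * (k₀ : 𝓞 K) - 1 := by
    rw [← map_pow, hR16, map_sub, map_mul, map_natCast, map_one, map_ofNat]
  have hPP := ideal_sq_K (QExt.Oi k K R) Θ (k₀ : 𝓞 K) hΘ16 hΘ.symm
  have hP4 : Ideal.span {2, 1 - Θ} ^ 4 = Ideal.span {(2 : 𝓞 K)} := by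
    rw [show 4 = 2 * 2 from rfl, pow_mul, hPP, ideal_sq_k _ _ hΘ16]
  have hfin := T.finrank_K
  have hP : Prime (Ideal.span {2, 1 - Θ}) :=
    prime_of_pow _ 2 4 Nat.prime_two hfin (by simpa using hP4)
  have hΘp : Prime (Ideal.span {Θ}) :=
    prime_of_pow _ p 4 T.hp hfin (by
      rw [Ideal.span_singleton_pow, show 4 = 2 * 2 from rfl, pow_mul, ← hΘ, ← map_pow, hR,
        map_natCast])
  have hσΘ : T.D.Oσ Θ = -Θ := by
    apply RingOfIntegers.ext
    change T.D.σ T.θ = algebraMap (𝓞 K) K (-Θ)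
    rw [map_neg]
    exact T.D_θ
  have hR0 : (R : k) ≠ 0 := by
    intro h
    have h1 : T.rp = 0 := h
    have h2 := T.hrp
    rw [h1, zero_pow two_ne_zero, eq_comm, Nat.cast_eq_zero] at h2
    exact T.hp.ne_zero h2
  exact descent_ram T.D _ hP 4 hP4 Θ hΘp hσΘ _ hPk0
    (by rw [hPP, Ideal.map_span, Set.image_pair, map_ofNat, map_sub, map_one]) R hR0 hΘ τ hτ.symm
    a ha c hc

theorem clTwo_K (T : TowerK k K p) (hrk : 1 ≤ Units.rank k) (hrank : 2 ≤ Units.rank K) :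
    clTwo (prin K) ∣ 2 := by
  obtain ⟨τ, hτ⟩ := T.exists_tau hrk
  have h := selmer_index_nf K
  set Sq := (powMonoidHom 2 : Kˣ →* Kˣ).range with hSq
  have hsq : ∀ x : Kˣ, x ^ 2 ∈ Sq := fun x => ⟨x, rfl⟩
  have h1 : Sq.relIndex (Sq ⊔ Subgroup.zpowers (-1)) ∣ 2 ^ 1 :=
    relIndex_step Sq Sq le_rfl hsq _ 0 (by simp)
  have h2 := relIndex_step Sq _ le_sup_left hsq (twoU K) 1 h1
  have h3 := relIndex_step Sq _ (le_sup_left.trans le_sup_left) hsq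
    (umap (algebraMap k K) τ) 2 h2
  set H := Sq ⊔ Subgroup.zpowers (-1) ⊔ Subgroup.zpowers (twoU K) ⊔
    Subgroup.zpowers (umap (algebraMap k K) τ) with hH
  have key : ∀ a ∈ selmer (prin K), ∀ c : kˣ,
      a * umap T.D.σ a = umap (algebraMap k K) (c ^ 2) → a ∈ H := by
    intro a ha c hc
    obtain ⟨y, d, m, hd, rfl⟩ := hτ a ha c hc
    obtain ⟨f, e, t, rfl⟩ := selmer_k T.hp T.hmod T.rp T.hrp T.hnot T.hgen d hd
    have e1 : umap (algebraMap k K) (-1) = -1 := by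
      apply Units.ext
      simp
    have e2 : umap (algebraMap k K) (twoU k) = twoU K := by
      apply Units.ext
      exact map_ofNat (algebraMap k K) 2
    have e3 : y ^ 2 * umap (algebraMap k K) (f ^ 2 * (-1) ^ e * twoU k ^ t * τ ^ m) =
        (y * umap (algebraMap k K) f) ^ 2 * (-1) ^ e * twoU K ^ t *
          (umap (algebraMap k K) τ) ^ m := by
      rw [map_mul, map_mul, map_mul, map_zpow, map_zpow, map_zpow, e1, e2, map_pow, mul_pow]
      simp only [mul_assoc]
    rw [e3]
    exact Subgroup.mul_mem_sup (Subgroup.mul_mem_sup (Subgroup.mul_mem_sup (hsq _) ⟨e, rfl⟩)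
      ⟨t, rfl⟩) ⟨m, rfl⟩
  have h4 : ∃ a0 : Kˣ, selmer (prin K) ≤ H ⊔ Subgroup.zpowers a0 := by
    by_cases hex : ∃ a0 ∈ selmer (prin K), ∃ c : kˣ,
        a0 * umap T.D.σ a0 = umap (algebraMap k K) (c ^ 2 * twoU k)
    · obtain ⟨a0, ha0, c0, hc0⟩ := hex
      refine ⟨a0, fun a ha => ?_⟩
      obtain ⟨c, hc | hc⟩ := T.norm_selmer a ha
      · exact Subgroup.mem_sup_left (key a ha c hc)
      · have h5 := key (a * a0) (mul_mem ha ha0) (c * c0 * twoU k) (by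
          rw [map_mul, mul_mul_mul_comm, hc, hc0, ← map_mul]
          congr 1
          rw [mul_pow, mul_pow, pow_two (twoU k), mul_mul_mul_comm])
        have h6 := Subgroup.mul_mem_sup h5 (inv_mem (Subgroup.mem_zpowers a0))
        rwa [mul_inv_cancel_right] at h6
    · refine ⟨1, fun a ha => ?_⟩
      obtain ⟨c, hc | hc⟩ := T.norm_selmer a ha
      · exact Subgroup.mem_sup_left (key a ha c hc)
      · exact absurd ⟨a, ha, c, hc⟩ hex
  obtain ⟨a0, h4⟩ := h4
  have h5 := relIndex_step Sq H (le_sup_left.trans (le_sup_left.trans le_sup_left)) hsq a0 3 h3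
  have h6 := (rank_bound _ _ _ (sq_le_selmer (prin K)) h4).trans h5
  rw [h] at h6
  have h7 : 2 ^ 3 * clTwo (prin K) ∣ 2 ^ 3 * 2 := by
    refine dvd_trans (mul_dvd_mul_right (pow_dvd_pow 2 ?_) _) h6
    omega
  exact Nat.dvd_of_mul_dvd_mul_left (by norm_num) h7

end TowerK
end KStep2

section LStep

theorem isIntegral_of_quad {F : Type*} [Field F] [NumberField F] (x : F) (c : 𝓞 F)
    (h : x ^ 2 - x - (c : F) = 0) : IsIntegral ℤ x := by
  have h1 : IsIntegral (𝓞 F) x := by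
    refine ⟨Polynomial.X ^ 2 - Polynomial.X - Polynomial.C c, by monicity!, ?_⟩
    simpa using h
  exact isIntegral_trans (A := 𝓞 F) x h1

variable {k K L : Type*} [Field k] [NumberField k] [Field K] [NumberField K] [Algebra k K]
  [Field L] [NumberField L] [Algebra K L] {p : ℕ}

theorem TowerK.inv (T : TowerK k K p) (D : QExt K L) (w : L) (hw : w ^ 2 = 2) (hσ : D.σ w = -w)
    (a : FI L) (ha : idealMap D.σ a = a) : ∃ b, idealMap (algebraMap K L) b = a := by
  obtain ⟨k₀, hk₀⟩ := exists_k0 T.hmod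
  have hw0 : w ≠ 0 := by
    rintro rfl
    rw [zero_pow two_ne_zero] at hw
    exact two_ne_zero hw.symm
  have hint : IsIntegral ℤ (algebraMap K L (algebraMap k K T.rp)) :=
    IsIntegral.map (algebraMap K L).toIntAlgHom (IsIntegral.map (algebraMap k K).toIntAlgHom
      (isIntegral_of_sq T.hrp (isIntegral_nat p)))
  set θ : L := algebraMap K L T.θ with hθ
  set r : L := algebraMap K L (algebraMap k K T.rp) with hr
  have hθr : θ ^ 2 = r := by rw [hθ, ← map_pow, T.hθ]
  have hrp : r ^ 2 = 16 * (k₀ : L) - 1 := by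
    rw [hr, ← map_pow, ← map_pow, T.hrp, map_natCast, map_natCast]
    have := congrArg (fun n : ℕ => (n : L)) hk₀
    push_cast at this
    linear_combination this
  let Rr : 𝓞 L := ⟨r, hint⟩
  let W : 𝓞 L := ⟨w, isIntegral_of_sq hw (by exact_mod_cast isIntegral_nat (F := L) 2)⟩
  let v : L := (θ - θ ^ 3) / w
  have hv : v ^ 2 = 1 + 8 * k₀ * (r - 2) := by
    simp only [v]
    rw [div_pow, hw, div_eq_iff two_ne_zero]
    have e0 : (θ - θ ^ 3) ^ 2 = r * (1 - r) ^ 2 := by rw [← hθr]; ring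
    rw [e0]
    linear_combination (r - 2) * hrp
  have hω : IsIntegral ℤ ((1 + v) / 2) := by
    apply isIntegral_of_quad _ (2 * (k₀ : 𝓞 L) * (Rr - 2))
    have : ((2 * (k₀ : 𝓞 L) * (Rr - 2) : 𝓞 L) : L) = 2 * k₀ * (r - 2) := by
      change algebraMap (𝓞 L) L (2 * (k₀ : 𝓞 L) * (Rr - 2)) = _
      simp only [map_mul, map_sub, map_natCast, map_ofNat]
      rfl
    rw [this]
    linear_combination hv / 4
  let ω : 𝓞 L := ⟨(1 + v) / 2, hω⟩
  have hσv : D.σ v = -v := by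
    simp only [v]
    rw [map_div₀, map_sub, map_pow, hθ, D.si, hσ, div_neg]
  refine D.inv_of_unramified ω W (2 * ω - 1) (-(k₀ : 𝓞 L) * (Rr - 2) * (2 * W)) ?_ a ha
  apply RingOfIntegers.ext
  change algebraMap (𝓞 L) L _ = algebraMap (𝓞 L) L 1
  have e1 : algebraMap (𝓞 L) L ω = (1 + v) / 2 := rfl
  have e2 : algebraMap (𝓞 L) L W = w := rfl
  have e3 : algebraMap (𝓞 L) L Rr = r := rfl
  have e4 : algebraMap (𝓞 L) L (D.Oσ ω) = (1 - v) / 2 := by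
    change D.σ ((1 + v) / 2) = _
    rw [map_div₀, map_add, map_one, hσv, map_ofNat]
    ring
  have e5 : algebraMap (𝓞 L) L (D.Oσ W) = -w := hσ
  simp only [map_mul, map_sub, map_add, map_neg, map_natCast, map_ofNat, map_one, e1, e2, e3, e4,
    e5]
  linear_combination hv - 4 * k₀ * (r - 2) * hw

theorem TowerK.main (T : TowerK k K p) (w : L) (hw : w ^ 2 = 2)
    (hnot : ∀ a : K, algebraMap K L a ≠ w)
    (hgen : ∀ x : L, ∃ a b : K, x = algebraMap K L a + algebraMap K L b * w)
    (hrk : 1 ≤ Units.rank k) (hrK : 2 ≤ Units.rank K)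
    (hrL : Units.rank L = 2 * Units.rank K + 1) :
    4 ∣ classNumber K ↔ 2 ∣ classNumber L := by
  have hw' : w ^ 2 = algebraMap K L 2 := by rw [hw, map_ofNat]
  let D := mkQ w 2 hw' hnot hgen
  have hσ : D.σ w = -w := mkQ_σ w 2 hw' hnot hgen
  rw [← card_class, ← card_class]
  constructor
  · intro h4
    by_contra h2
    exact D.toQData.not_four_dvd h2 (T.clTwo_K hrk hrK) h4
  · intro h2
    refine D.toQData.four_dvd ?_ ?_ h2
    · rw [finrank_ker, finrank_ker, hrL]
    · intro a ha
      exact T.inv D w hw hσ a ha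

end LStep

section Ranks

/-- The infinite place of a real embedding. -/
noncomputable abbrev realPlace {F : Type*} [Field F] (φ : F →+* ℝ) : InfinitePlace F :=
  InfinitePlace.mk (Complex.ofRealHom.comp φ)

theorem mk_ne_of {F : Type*} [Field F] (φ χ : F →+* ℂ) (x : F) (a b : ℝ) (ha : φ x = a)
    (hb : χ x = b) (hab : a ^ 2 = b ^ 2) (hne : a ≠ b) : InfinitePlace.mk φ ≠ InfinitePlace.mk χ := by
  intro h
  have h1 := congrArg (fun v : InfinitePlace F => v (1 + x)) h
  simp only [InfinitePlace.apply, map_add, map_one, ha, hb] at h1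
  have h2 : ‖((1 + a : ℝ) : ℂ)‖ = ‖((1 + b : ℝ) : ℂ)‖ := by exact_mod_cast h1
  rw [Complex.norm_real, Complex.norm_real, Real.norm_eq_abs, Real.norm_eq_abs, abs_eq_abs] at h2
  rcases sq_eq_sq_iff_eq_or_eq_neg.1 hab with h3 | h3
  · exact hne h3
  · rcases h2 with h2 | h2
    · apply hne
      linarith
    · linarith

variable {k K L : Type*} [Field k] [NumberField k] [Field K] [NumberField K] [Algebra k K]
  [Field L] [NumberField L] [Algebra K L] {p : ℕ}

theorem TowerK.rank_k (T : TowerK k K p) : 1 ≤ Units.rank k := by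
  have hrp' : T.rp ^ 2 = algebraMap ℚ k (p : ℚ) := by rw [T.hrp]; simp
  let D := mkQ T.rp (p : ℚ) hrp' T.hnot T.hgen
  have hσ : D.σ T.rp = -T.rp := mkQ_σ T.rp (p : ℚ) hrp' T.hnot T.hgen
  have h := T.hψ
  have h1 : realPlace T.ψ ≠ realPlace (T.ψ.comp D.σ) := by
    apply mk_ne_of _ _ T.rp (T.ψ T.rp) (-T.ψ T.rp)
    · simp
    · simp [hσ]
    · ring
    · linarith
  have h2 : 1 < Fintype.card (InfinitePlace k) := Fintype.one_lt_card_iff.2 ⟨_, _, h1⟩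
  rw [Units.rank]
  omega

theorem TowerK.rank_K (T : TowerK k K p) (φ : K →+* ℝ) (hφ : 0 < φ T.θ) : 2 ≤ Units.rank K := by
  have : FiniteDimensional k K := Module.finite_of_finrank_pos (by
    rw [quad_finrank T.θ T.hnot' T.hgen']; norm_num)
  let χ : K →+* ℂ := ComplexEmbedding.lift K (Complex.ofRealHom.comp T.ψ)
  have hχ : ∀ x : k, χ (algebraMap k K x) = T.ψ x := by
    intro x
    simp [χ]
  have h := T.hψ
  have h1 : realPlace φ ≠ realPlace (φ.comp T.D.σ) := by
    apply mk_ne_of _ _ T.θ (φ T.θ) (-φ T.θ)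
    · simp
    · simp [T.D_θ]
    · ring
    · linarith
  have hθ2 : φ (algebraMap k K T.rp) = (φ T.θ) ^ 2 := by rw [← map_pow, T.hθ]
  have hp2 : (T.ψ T.rp) ^ 2 = p := by rw [← map_pow, T.hrp, map_natCast]
  have hp3 : (φ (algebraMap k K T.rp)) ^ 2 = p := by
    rw [← map_pow, ← map_pow, T.hrp, map_natCast, map_natCast]
  have hpos : 0 < φ (algebraMap k K T.rp) := by rw [hθ2]; positivity
  have h2 : realPlace φ ≠ InfinitePlace.mk χ := by
    apply mk_ne_of _ _ (algebraMap k K T.rp) (φ (algebraMap k K T.rp)) (T.ψ T.rp)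
    · simp
    · exact hχ _
    · rw [hp2, hp3]
    · linarith
  have h3 : realPlace (φ.comp T.D.σ) ≠ InfinitePlace.mk χ := by
    apply mk_ne_of _ _ (algebraMap k K T.rp) (φ (algebraMap k K T.rp)) (T.ψ T.rp)
    · simp [T.D.si]
    · exact hχ _
    · rw [hp2, hp3]
    · linarith
  have h4 : 2 < Fintype.card (InfinitePlace K) :=
    Fintype.two_lt_card_iff.2 ⟨_, _, _, h1, h2, h3⟩
  rw [Units.rank]
  omega

theorem rank_L (w : L) (hw : w ^ 2 = 2)
    (hnot : ∀ a : K, algebraMap K L a ≠ w)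
    (hgen : ∀ x : L, ∃ a b : K, x = algebraMap K L a + algebraMap K L b * w) :
    Units.rank L = 2 * Units.rank K + 1 := by
  have hfin := quad_finrank w hnot hgen
  have : Algebra.IsQuadraticExtension K L := { finrank_eq_two' := hfin }
  have : IsGalois K L := inferInstance
  have : IsUnramifiedAtInfinitePlaces K L := by
    constructor
    intro v
    rw [← InfinitePlace.mk_embedding v, InfinitePlace.isUnramified_mk_iff_isUnmixed]
    intro hreal
    set φ := v.embedding
    have hc : ∀ a : K, (starRingEnd ℂ) (φ (algebraMap K L a)) = φ (algebraMap K L a) := by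
      intro a
      exact RingHom.congr_fun hreal a
    have hφw : (starRingEnd ℂ) (φ w) = φ w := by
      have h1 : (φ w) ^ 2 = ((Real.sqrt 2 : ℝ) : ℂ) ^ 2 := by
        rw [← map_pow, hw, map_ofNat, ← Complex.ofReal_pow, Real.sq_sqrt (by norm_num)]
        simp
      rcases sq_eq_sq_iff_eq_or_eq_neg.1 h1 with h2 | h2
      · rw [h2, Complex.conj_ofReal]
      · rw [h2, map_neg, Complex.conj_ofReal]
    apply RingHom.ext
    intro x
    obtain ⟨a, b, rfl⟩ := hgen x
    change (starRingEnd ℂ) (φ _) = φ _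
    simp only [map_add, map_mul, hc, hφw]
  have hcard := IsUnramifiedAtInfinitePlaces.card_infinitePlace K L
  rw [hfin] at hcard
  have hpos : 0 < Fintype.card (InfinitePlace K) := Fintype.card_pos
  rw [Units.rank, Units.rank, hcard]
  omega

end Ranks

section Concrete

/-- The field `F(δ)` where `δ ^ 2 ∈ F`. -/
def quadField (F : IntermediateField ℚ ℝ) (δ : ℝ) (h : δ ^ 2 ∈ F) : IntermediateField ℚ ℝ where
  carrier := {x | ∃ a ∈ F, ∃ b ∈ F, x = a + b * δ}
  mul_mem' := by
    rintro _ _ ⟨a, ha, b, hb, rfl⟩ ⟨a', ha', b', hb', rfl⟩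
    refine ⟨a * a' + b * b' * δ ^ 2, ?_, a * b' + b * a', ?_, by ring⟩
    · exact add_mem (mul_mem ha ha') (mul_mem (mul_mem hb hb') h)
    · exact add_mem (mul_mem ha hb') (mul_mem hb ha')
  add_mem' := by
    rintro _ _ ⟨a, ha, b, hb, rfl⟩ ⟨a', ha', b', hb', rfl⟩
    exact ⟨a + a', add_mem ha ha', b + b', add_mem hb hb', by ring⟩
  algebraMap_mem' := by
    intro q
    exact ⟨_, F.algebraMap_mem q, 0, zero_mem F, by ring⟩
  inv_mem' := by
    rintro _ ⟨a, ha, b, hb, rfl⟩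
    by_cases hx : a + b * δ = 0
    · exact ⟨0, zero_mem F, 0, zero_mem F, by rw [hx]; simp⟩
    by_cases hn : a - b * δ = 0
    · refine ⟨(2 * a)⁻¹, inv_mem (mul_mem (ofNat_mem F 2) ha), 0, zero_mem F, ?_⟩
      rw [zero_mul, add_zero]
      congr 1
      linear_combination -hn
    · have h0 : a ^ 2 - b ^ 2 * δ ^ 2 ≠ 0 := by
        have e : a ^ 2 - b ^ 2 * δ ^ 2 = (a + b * δ) * (a - b * δ) := by ring
        rw [e]
        exact mul_ne_zero hx hn
      have hm : a ^ 2 - b ^ 2 * δ ^ 2 ∈ F :=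
        sub_mem (pow_mem ha 2) (mul_mem (pow_mem hb 2) h)
      refine ⟨a / (a ^ 2 - b ^ 2 * δ ^ 2), div_mem ha hm, -b / (a ^ 2 - b ^ 2 * δ ^ 2),
        div_mem (neg_mem hb) hm, ?_⟩
      rw [inv_eq_iff_eq_inv, eq_comm, inv_eq_of_mul_eq_one_left]
      field_simp
      ring

theorem quadField_gen (F : IntermediateField ℚ ℝ) (δ : ℝ) (h : δ ^ 2 ∈ F) (S : Set ℝ)
    (hS : ∀ s ∈ S, s ∈ F ∨ s = δ) (x : ℝ) (hx : x ∈ IntermediateField.adjoin ℚ S) :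
    ∃ a ∈ F, ∃ b ∈ F, x = a + b * δ := by
  have h1 : IntermediateField.adjoin ℚ S ≤ quadField F δ h := by
    rw [IntermediateField.adjoin_le_iff]
    intro s hs
    rcases hS s hs with h2 | h2
    · exact ⟨s, h2, 0, zero_mem F, by ring⟩
    · exact ⟨0, zero_mem F, 1, one_mem F, by rw [h2]; ring⟩
  exact h1 hx

theorem no_sq_p {p : ℕ} (hp : p.Prime) (a : ℚ) : (a : ℝ) ≠ Real.sqrt p := by
  intro h
  exact hp.irrational_sqrt ⟨a, h⟩

theorem no_sq_2p {p : ℕ} (hp : p.Prime) (h2 : p ≠ 2) (a : ℚ) : (a : ℝ) ^ 2 ≠ 2 * p := by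
  intro h
  have h1 : a ^ 2 = 2 * p := by exact_mod_cast h
  have : Fact p.Prime := ⟨hp⟩
  have ha : a ≠ 0 := by
    rintro rfl
    have : (0 : ℚ) < 2 * p := by have := hp.pos; positivity
    rw [zero_pow two_ne_zero] at h1
    linarith
  have hp0 : (p : ℚ) ≠ 0 := by exact_mod_cast hp.ne_zero
  have h3 := congrArg (padicValRat p) h1
  rw [padicValRat.pow, padicValRat.mul two_ne_zero hp0, padicValRat.self hp.one_lt] at h3
  have h4 : padicValRat p 2 = 0 := by
    have : padicValRat p ((2 : ℕ) : ℚ) = 0 := by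
      rw [padicValRat.of_nat, padicValNat_primes h2]
      rfl
    exact_mod_cast this
  rw [h4] at h3
  omega

end Concrete

/-- For a prime `p ≡ -1 (mod 16)`, with `K = ℚ(⁴√p) ⊂ ℝ` and
`L = K(√2) = ℚ(⁴√p, √2) ⊂ ℝ`, one has `4 ∣ h_K` if and only if `2 ∣ h_L`. -/
theorem four_dvd_classNumber_iff_two_dvd_classNumber_adjoin_sqrt_two
    (p : ℕ) (hp : p.Prime) (hmod : p % 16 = 15)
    (K L : IntermediateField ℚ ℝ)
    (hK : K = ℚ⟮Real.sqrt (Real.sqrt p)⟯)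
    (hL : L = IntermediateField.adjoin ℚ {Real.sqrt (Real.sqrt p), Real.sqrt 2})
    [NumberField K] [NumberField L] :
    4 ∣ classNumber K ↔ 2 ∣ classNumber L := by
  have hp2 : p ≠ 2 := by
    rintro rfl
    omega
  have hppos : (0 : ℝ) < p := by exact_mod_cast hp.pos
  set r : ℝ := Real.sqrt p with hr
  have hrpos : 0 < r := Real.sqrt_pos.2 hppos
  have hr2 : r ^ 2 = p := Real.sq_sqrt hppos.le
  set t : ℝ := Real.sqrt r with ht
  have htpos : 0 < t := Real.sqrt_pos.2 hrpos
  have ht2 : t ^ 2 = r := Real.sq_sqrt hrpos.le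
  set w : ℝ := Real.sqrt 2 with hw
  have hw2 : w ^ 2 = 2 := Real.sq_sqrt (by norm_num)
  let k : IntermediateField ℚ ℝ := ℚ⟮r⟯
  have hrk : r ∈ k := mem_adjoin_simple_self ℚ r
  have htK : t ∈ K := by rw [hK]; exact mem_adjoin_simple_self ℚ t
  have htL : t ∈ L := by rw [hL]; exact IntermediateField.subset_adjoin _ _ (by simp)
  have hwL : w ∈ L := by rw [hL]; exact IntermediateField.subset_adjoin _ _ (by simp)
  have hkK : k ≤ K := by
    rw [IntermediateField.adjoin_simple_le_iff, ← ht2]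
    exact pow_mem htK 2
  have hKL : K ≤ L := by
    rw [hK, IntermediateField.adjoin_simple_le_iff]
    exact htL
  let a1 : Algebra k K := (inclusion hkK).toRingHom.toAlgebra
  let a2 : Algebra K L := (inclusion hKL).toRingHom.toAlgebra
  have c1 : ∀ x : k, ((algebraMap k K x : K) : ℝ) = x := fun x => rfl
  have c2 : ∀ x : K, ((algebraMap K L x : L) : ℝ) = x := fun x => rfl
  have c0 : ∀ x : ℚ, ((algebraMap ℚ k x : k) : ℝ) = x := by
    intro x
    simp
  have nfk : NumberField k :=
    { to_charZero := inferInstance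
      to_finiteDimensional := by
        have h1 : FiniteDimensional ℚ K := NumberField.to_finiteDimensional
        exact FiniteDimensional.of_injective (inclusion hkK).toLinearMap
          (inclusion hkK).injective }
  -- generation over ℚ
  have gen0 : ∀ x ∈ k, ∃ a b : ℚ, x = a + b * r := by
    intro x hx
    obtain ⟨a, ha, b, hb, h⟩ := quadField_gen ⊥ r
      (by rw [hr2]; exact _root_.natCast_mem ⊥ p) {r} (by rintro s rfl; exact Or.inr rfl) x hx
    obtain ⟨a', rfl⟩ := IntermediateField.mem_bot.1 ha
    obtain ⟨b', rfl⟩ := IntermediateField.mem_bot.1 hb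
    exact ⟨a', b', by simpa using h⟩
  have gen1 : ∀ x ∈ K, ∃ a ∈ k, ∃ b ∈ k, x = a + b * t := by
    intro x hx
    rw [hK] at hx
    exact quadField_gen k t (by rw [ht2]; exact hrk) {t} (by rintro s rfl; exact Or.inr rfl) x hx
  have gen2 : ∀ x ∈ L, ∃ a ∈ K, ∃ b ∈ K, x = a + b * w := by
    intro x hx
    rw [hL] at hx
    refine quadField_gen K w (by rw [hw2]; exact ofNat_mem K 2) {t, w} ?_ x hx
    rintro s (rfl | rfl)
    · exact Or.inl htK
    · exact Or.inr rfl
  have not0 : ∀ a : ℚ, (a : ℝ) ≠ r := no_sq_p hp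
  have lin0 : ∀ a b : ℚ, (a : ℝ) + b * r = 0 → a = 0 ∧ b = 0 := by
    intro a b h
    have hb : b = 0 := by
      by_contra hb
      apply not0 (-a / b)
      have hb' : (b : ℝ) ≠ 0 := by exact_mod_cast hb
      push_cast
      rw [div_eq_iff hb']
      linear_combination -h
    subst hb
    refine ⟨?_, rfl⟩
    have : (a : ℝ) = 0 := by simpa using h
    exact_mod_cast this
  have sq_aux : ∀ a b : ℚ, a ^ 2 + p * b ^ 2 = 0 → a = 0 ∧ b = 0 := by
    intro a b h
    have hpq : (0 : ℚ) < p := by exact_mod_cast hp.pos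
    have h1 := sq_nonneg a
    have h2 := mul_nonneg hpq.le (sq_nonneg b)
    have h3 : a ^ 2 = 0 := by linarith
    have h4 : (p : ℚ) * b ^ 2 = 0 := by linarith
    refine ⟨pow_eq_zero_iff two_ne_zero |>.1 h3, ?_⟩
    exact pow_eq_zero_iff two_ne_zero |>.1 ((mul_eq_zero.1 h4).resolve_left hpq.ne')
  have not1 : ∀ x ∈ k, x ≠ t := by
    intro x hx h
    obtain ⟨a, b, rfl⟩ := gen0 x hx
    have h1 : ((a ^ 2 + p * b ^ 2 : ℚ) : ℝ) + ((2 * a * b - 1 : ℚ) : ℝ) * r = 0 := by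
      push_cast
      have h2 : ((a : ℝ) + b * r) ^ 2 = r := by rw [h, ht2]
      linear_combination h2 - b ^ 2 * hr2
    obtain ⟨h2, h3⟩ := lin0 _ _ h1
    obtain ⟨rfl, rfl⟩ := sq_aux _ _ h2
    norm_num at h3
  have not2 : ∀ x ∈ K, x ≠ w := by
    intro x hx h
    obtain ⟨a, ha, b, hb, rfl⟩ := gen1 x hx
    have h1 : (a ^ 2 + b ^ 2 * r - 2) + (2 * a * b) * t = 0 := by
      have h2 : (a + b * t) ^ 2 = 2 := by rw [h, hw2]
      linear_combination h2 - b ^ 2 * ht2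
    have h3 : a * b = 0 := by
      by_contra hab
      have hab2 : 2 * a * b ≠ 0 := by
        rw [mul_assoc]
        exact mul_ne_zero two_ne_zero hab
      refine not1 (-(a ^ 2 + b ^ 2 * r - 2) / (2 * a * b)) ?_ ?_
      · refine div_mem (neg_mem (sub_mem (add_mem (pow_mem ha 2) (mul_mem (pow_mem hb 2) hrk))
          (ofNat_mem k 2))) (mul_mem (mul_mem (ofNat_mem k 2) ha) hb)
      · rw [div_eq_iff hab2]
        linear_combination -h1
    have h4 : a ^ 2 + b ^ 2 * r = 2 := by linear_combination h1 - 2 * t * h3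
    rcases mul_eq_zero.1 h3 with h5 | h5
    · rw [h5] at h4
      obtain ⟨x, y, rfl⟩ := gen0 b hb
      have h6 : ((2 * p * x * y - 2 : ℚ) : ℝ) + ((x ^ 2 + p * y ^ 2 : ℚ) : ℝ) * r = 0 := by
        push_cast
        linear_combination h4 - (2 * x * y + y ^ 2 * r) * hr2
      obtain ⟨h7, h8⟩ := lin0 _ _ h6
      obtain ⟨rfl, rfl⟩ := sq_aux _ _ h8
      norm_num at h7
    · rw [h5] at h4
      obtain ⟨x, y, rfl⟩ := gen0 a ha
      have h6 : ((x ^ 2 + p * y ^ 2 - 2 : ℚ) : ℝ) + ((2 * x * y : ℚ) : ℝ) * r = 0 := by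
        push_cast
        linear_combination h4 - y ^ 2 * hr2
      obtain ⟨h7, h8⟩ := lin0 _ _ h6
      have h9 : x * y = 0 := by linear_combination h8 / 2
      rcases mul_eq_zero.1 h9 with rfl | rfl
      · apply no_sq_2p hp hp2 (p * y)
        have h10 : (p : ℚ) * y ^ 2 = 2 := by linear_combination h7
        have h11 : (p : ℝ) * y ^ 2 = 2 := by exact_mod_cast h10
        push_cast
        linear_combination p * h11
      · apply irrational_sqrt_two
        refine ⟨|x|, ?_⟩
        have h10 : x ^ 2 = 2 := by linear_combination h7
        have h11 : (x : ℝ) ^ 2 = 2 := by exact_mod_cast h10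
        rw [← h11, Real.sqrt_sq_eq_abs]
        simp
  -- assemble the tower
  let rp : k := ⟨r, hrk⟩
  have hrp : rp ^ 2 = (p : k) := Subtype.ext (by simpa [rp] using hr2)
  have hnot0 : ∀ a : ℚ, algebraMap ℚ k a ≠ rp := by
    intro a h
    apply not0 a
    rw [← c0, h]
  have hgen0 : ∀ x : k, ∃ a b : ℚ, x = algebraMap ℚ k a + algebraMap ℚ k b * rp := by
    rintro ⟨x, hx⟩
    obtain ⟨a, b, h⟩ := gen0 x hx
    refine ⟨a, b, Subtype.ext ?_⟩
    change x = ((algebraMap ℚ k a : k) : ℝ) + ((algebraMap ℚ k b : k) : ℝ) * r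
    rw [c0, c0, h]
  let D0 := mkQ rp (p : ℚ) (by rw [hrp]; simp) hnot0 hgen0
  have hD0 : D0.σ rp = -rp := mkQ_σ rp (p : ℚ) _ hnot0 hgen0
  let T : TowerK k K p :=
    { hp := hp
      hmod := hmod
      rp := rp
      hrp := hrp
      hnot := hnot0
      hgen := hgen0
      θ := ⟨t, htK⟩
      hθ := Subtype.ext ht2
      hnot' := by
        rintro ⟨x, hx⟩ h
        exact not1 x hx (congrArg Subtype.val h)
      hgen' := by
        rintro ⟨x, hx⟩
        obtain ⟨a, ha, b, hb, h⟩ := gen1 x hx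
        exact ⟨⟨a, ha⟩, ⟨b, hb⟩, Subtype.ext h⟩
      ψ := k.val.toRingHom.comp D0.σ
      hψ := by
        change ((D0.σ rp : k) : ℝ) < 0
        rw [hD0]
        change -r < 0
        linarith }
  have hnot2 : ∀ a : K, algebraMap K L a ≠ ⟨w, hwL⟩ := by
    rintro ⟨x, hx⟩ h
    exact not2 x hx (congrArg Subtype.val h)
  have hgen2 : ∀ x : L, ∃ a b : K, x = algebraMap K L a + algebraMap K L b * ⟨w, hwL⟩ := by
    rintro ⟨x, hx⟩
    obtain ⟨a, ha, b, hb, h⟩ := gen2 x hx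
    exact ⟨⟨a, ha⟩, ⟨b, hb⟩, Subtype.ext h⟩
  have hw2' : (⟨w, hwL⟩ : L) ^ 2 = 2 := Subtype.ext hw2
  exact T.main ⟨w, hwL⟩ hw2' hnot2 hgen2 T.rank_k (T.rank_K K.val.toRingHom htpos)
    (rank_L ⟨w, hwL⟩ hw2' hnot2 hgen2)
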